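/- Let n, k, t be integers with 1 < t ≤ k/4 - 2 and n ≥ 2k + 14t. Then any non-trivial intersecting family F of k-element subsets of [n] satisfies δ_t(F) ≤ C(n-t-1, k-t-1) - C(n-t-k-1, k-t-1). -/

import Mathlib

section

section PartA

open Finset
open scoped FinsetFamily

lemma lym_down {α : Type*} [DecidableEq α] (X : Finset α) (Y Z : Finset (Finset α)) (a b : ℕ)
    (hba : b ≤ a) (hY : ∀ y ∈ Y, y ⊆ X ∧ y.card = a)
    (hZ : ∀ y ∈ Y, ∀ z, z ⊆ y → z.card = b → z ∈ Z) :
    Y.card * X.card.choose b ≤ Z.card * X.card.choose a := by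
  classical
  set Z' := Z.filter (fun z => z ⊆ X ∧ z.card = b) with hZ'
  have h1 : Y.card * a.choose b ≤ Z'.card * (X.card - b).choose (a - b) := by
    apply Finset.card_mul_le_card_mul (fun y z => z ⊆ y)
    · intro y hy
      obtain ⟨h1, h2⟩ := hY y hy
      rw [← h2, ← Finset.card_powersetCard]
      apply Finset.card_le_card
      intro z hz
      rw [Finset.mem_powersetCard] at hz
      rw [Finset.mem_bipartiteAbove, hZ', Finset.mem_filter]
      exact ⟨⟨hZ y hy z hz.1 hz.2, hz.1.trans h1, hz.2⟩, hz.1⟩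
    · intro z hz
      rw [hZ', Finset.mem_filter] at hz
      obtain ⟨_, hzX, hzb⟩ := hz
      have : (X.card - b).choose (a - b) = (Finset.powersetCard (a - b) (X \ z)).card := by
        rw [Finset.card_powersetCard, Finset.card_sdiff_of_subset hzX, hzb]
      rw [this]
      apply Finset.card_le_card_of_injOn (fun y => y \ z)
      · intro y hy
        rw [Finset.mem_coe, Finset.mem_bipartiteBelow] at hy
        obtain ⟨hy1, hy2⟩ := hy
        rw [Finset.mem_coe, Finset.mem_powersetCard]
        refine ⟨Finset.sdiff_subset_sdiff (hY y hy1).1 le_rfl, ?_⟩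
        rw [Finset.card_sdiff_of_subset hy2, (hY y hy1).2, hzb]
      · intro y hy y' hy' h
        rw [Finset.mem_coe, Finset.mem_bipartiteBelow] at hy hy'
        simp only at h
        rw [← Finset.sdiff_union_of_subset hy.2, ← Finset.sdiff_union_of_subset hy'.2, h]
  rcases Nat.lt_or_ge X.card a with h | h
  · have : Y = ∅ := by
      apply Finset.eq_empty_of_forall_notMem
      intro y hy
      have := Finset.card_le_card (hY y hy).1
      rw [(hY y hy).2] at this
      omega
    simp [this]
  · have h3 := Nat.choose_mul (n := X.card) (k := a) (s := b) hba
    have h4 : Z'.card ≤ Z.card := Finset.card_filter_le _ _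
    have h5 : 0 < a.choose b := Nat.choose_pos hba
    have h6 : Y.card * a.choose b * X.card.choose b ≤ Z.card * (X.card.choose a) * a.choose b := by
      calc Y.card * a.choose b * X.card.choose b
          ≤ (Z'.card * (X.card - b).choose (a - b)) * X.card.choose b := Nat.mul_le_mul_right _ h1
        _ = Z'.card * (X.card.choose b * (X.card - b).choose (a - b)) := by ring
        _ = Z'.card * (X.card.choose a * a.choose b) := by rw [h3]
        _ ≤ Z.card * (X.card.choose a * a.choose b) := Nat.mul_le_mul_right _ h4
        _ = _ := by ring
    have : (Y.card * X.card.choose b) * a.choose b ≤ (Z.card * X.card.choose a) * a.choose b := by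
      calc _ = Y.card * a.choose b * X.card.choose b := by ring
        _ ≤ _ := h6
    exact Nat.le_of_mul_le_mul_right this h5

lemma exists_initSeg (n r m : ℕ) (hm : m ≤ n.choose r) :
    ∃ C : Finset (Finset (Fin n)), Finset.Colex.IsInitSeg C r ∧ C.card = m := by
  classical
  induction m with
  | zero => exact ⟨∅, by simp [Finset.Colex.IsInitSeg, Set.Sized], rfl⟩
  | succ m ih =>
    obtain ⟨C, hC, hCm⟩ := ih (by omega)
    have hCsub : C ⊆ powersetCard r univ := by
      intro s hs
      rw [mem_powersetCard]; exact ⟨subset_univ _, hC.1 hs⟩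
    have hne : ((powersetCard r univ : Finset (Finset (Fin n))) \ C).Nonempty := by
      rw [← card_pos, card_sdiff_of_subset hCsub, card_powersetCard, card_univ, Fintype.card_fin]
      omega
    obtain ⟨s, hs, hmin⟩ := Finset.exists_min_image _ (fun s => toColex s) hne
    rw [mem_sdiff, mem_powersetCard] at hs
    refine ⟨insert s C, ⟨?_, ?_⟩, ?_⟩
    · intro u hu
      rw [mem_coe, mem_insert] at hu
      rcases hu with rfl | hu
      · exact hs.1.2
      · exact hC.1 hu
    · intro u v hu ⟨hv, hvr⟩
      rw [mem_insert] at hu ⊢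
      rcases hu with rfl | hu
      · right
        by_contra hvC
        have := hmin v (by rw [mem_sdiff, mem_powersetCard]; exact ⟨⟨subset_univ _, hvr⟩, hvC⟩)
        exact absurd hv (not_lt.mpr this)
      · right
        exact hC.2 hu ⟨hv, hvr⟩
    · rw [card_insert_of_notMem hs.2, hCm]

lemma below_initSeg (n r x : ℕ) (hx : x ≤ n) :
    Finset.Colex.IsInitSeg (powersetCard r (univ.filter (fun i : Fin n => i.val < x))) r ∧
    (univ.filter (fun i : Fin n => i.val < x)).card = x := by
  classical
  refine ⟨⟨?_, ?_⟩, ?_⟩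
  · intro s hs
    rw [mem_coe, mem_powersetCard] at hs
    exact hs.2
  · intro s u hs ⟨hu, hur⟩
    rw [mem_powersetCard] at hs ⊢
    refine ⟨?_, hur⟩
    intro i hi
    rw [mem_filter]
    refine ⟨mem_univ _, ?_⟩
    by_contra hix
    rw [Finset.Colex.lt_iff_exists_forall_lt] at hu
    obtain ⟨b, hb, _, hb'⟩ := hu
    have hbx : b.val < x := (mem_filter.mp (hs.1 hb)).2
    have his : i ∉ s := fun h => hix (mem_filter.mp (hs.1 h)).2
    have := hb' i hi his
    have : i.val < b.val := this
    omega
  · have : (univ.filter (fun i : Fin n => i.val < x)) = (range x).attachFin (fun i hi => by rw [mem_range] at hi; omega) := by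
      ext i; simp
    rw [this, card_attachFin, card_range]

lemma kk_interp (n : ℕ) (A : Finset (Finset (Fin n))) (r l x : ℕ)
    (hA : (A : Set (Finset (Fin n))).Sized r) (hxn : x + 1 ≤ n) (hl : 1 ≤ l) (hlr : l ≤ r)
    (hrx : r ≤ x) (h1 : x.choose r ≤ A.card) (h2 : A.card ≤ (x+1).choose r) :
    x.choose l * x.choose (r-1) + (A.card - x.choose r) * x.choose (l-1)
      ≤ (∂^[r-l] A).card * x.choose (r-1) := by
  classical
  obtain ⟨C, hC, hCA⟩ := exists_initSeg n r A.card (by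
    have : A ⊆ powersetCard r univ := by
      intro s hs
      rw [mem_powersetCard]; exact ⟨subset_univ _, hA hs⟩
    have := card_le_card this
    simpa using this)
  have hkk := Finset.iterated_kk (k := r - l) hA hCA.le hC
  obtain ⟨hP, hX⟩ := below_initSeg n r x (by omega)
  obtain ⟨hP', hX'⟩ := below_initSeg n r (x+1) hxn
  set X := univ.filter (fun i : Fin n => i.val < x) with hXdef
  set X' := univ.filter (fun i : Fin n => i.val < x + 1) with hXdef'
  set P := powersetCard r X with hPdef
  have hPC : P ⊆ C := by
    rcases hP.total hC with h | h
    · exact h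
    · have := Finset.eq_of_subset_of_card_le h (by rw [hPdef, card_powersetCard, hX, hCA]; exact h1)
      rw [this]
  have hCP' : C ⊆ powersetCard r X' := by
    rcases hC.total hP' with h | h
    · exact h
    · have := Finset.eq_of_subset_of_card_le h (by rw [card_powersetCard, hX', hCA]; exact h2)
      rw [this]
  let p : Fin n := ⟨x, by omega⟩
  have hpX : p ∉ X := by simp [hXdef, p]
  have hmemX' : ∀ i ∈ X', i ≠ p → i ∈ X := by
    intro i hi hip
    rw [hXdef', mem_filter] at hi
    rw [hXdef, mem_filter]
    refine ⟨mem_univ _, ?_⟩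
    have : i.val ≠ x := fun h => hip (Fin.ext h)
    omega
  have hCp : ∀ s ∈ C \ P, p ∈ s := by
    intro s hs
    rw [mem_sdiff] at hs
    by_contra hps
    apply hs.2
    have := mem_powersetCard.mp (hCP' hs.1)
    rw [hPdef, mem_powersetCard]
    exact ⟨fun i hi => hmemX' i (this.1 hi) (fun h => hps (h ▸ hi)), this.2⟩
  set Y := (C \ P).image (fun s => s.erase p) with hYdef
  have hYcard : Y.card = A.card - x.choose r := by
    rw [hYdef, card_image_of_injOn, card_sdiff_of_subset hPC, hCA, hPdef, card_powersetCard, hX]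
    intro s hs s' hs' h
    simp only at h
    rw [← insert_erase (hCp s hs), ← insert_erase (hCp s' hs'), h]
  have hYprop : ∀ y ∈ Y, y ⊆ X ∧ y.card = r - 1 := by
    intro y hy
    rw [hYdef, mem_image] at hy
    obtain ⟨s, hs, rfl⟩ := hy
    have h3 := mem_powersetCard.mp (hCP' (mem_sdiff.mp hs).1)
    refine ⟨?_, by rw [card_erase_of_mem (hCp s hs), h3.2]⟩
    intro i hi
    rw [mem_erase] at hi
    exact hmemX' i (h3.1 hi.2) hi.1
  set S := ∂^[r-l] C with hSdef
  set Zs := (S.filter (fun z => p ∈ z)).image (fun s => s.erase p) with hZs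
  have hlym := lym_down X Y Zs (r-1) (l-1) (by omega) hYprop (by
    intro y hy z hzy hz
    rw [hYdef, mem_image] at hy
    obtain ⟨s, hs, rfl⟩ := hy
    have hpz : p ∉ z := fun h => by simpa using hzy h
    rw [hZs, mem_image]
    refine ⟨insert p z, ?_, erase_insert hpz⟩
    rw [mem_filter]
    refine ⟨?_, mem_insert_self _ _⟩
    rw [hSdef, mem_shadow_iterate_iff_exists_sdiff]
    have hsub : insert p z ⊆ s := by
      rw [insert_subset_iff]
      exact ⟨hCp s hs, hzy.trans (erase_subset _ _)⟩
    refine ⟨s, (mem_sdiff.mp hs).1, hsub, ?_⟩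
    rw [card_sdiff_of_subset hsub, card_insert_of_notMem hpz, hz,
      (mem_powersetCard.mp (hCP' (mem_sdiff.mp hs).1)).2]
    omega)
  have hlow : powersetCard l X ⊆ S.filter (fun z => p ∉ z) := by
    intro z hz
    rw [mem_powersetCard] at hz
    rw [mem_filter]
    refine ⟨?_, fun h => hpX (hz.1 h)⟩
    obtain ⟨s, hzs, hsX, hs⟩ := Finset.exists_subsuperset_card_eq hz.1 (n := r) (by omega) (by omega)
    rw [hSdef, mem_shadow_iterate_iff_exists_sdiff]
    refine ⟨s, hPC (by rw [hPdef, mem_powersetCard]; exact ⟨hsX, hs⟩), hzs, ?_⟩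
    rw [card_sdiff_of_subset hzs]; omega
  have hcount : x.choose l + Zs.card ≤ S.card := by
    have e1 := card_le_card hlow
    rw [card_powersetCard, hX] at e1
    have e2 : Zs.card ≤ (S.filter (fun z => p ∈ z)).card := card_image_le
    have e3 := card_filter_add_card_filter_not (s := S) (fun z => p ∈ z)
    omega
  rw [hYcard, hX] at hlym
  calc x.choose l * x.choose (r-1) + (A.card - x.choose r) * x.choose (l-1)
      ≤ x.choose l * x.choose (r-1) + Zs.card * x.choose (r-1) := by omega
    _ = (x.choose l + Zs.card) * x.choose (r-1) := by ring
    _ ≤ S.card * x.choose (r-1) := Nat.mul_le_mul_right _ hcount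
    _ ≤ _ := Nat.mul_le_mul_right _ hkk

/-- the `l`-subsets of `X` disjoint from some member of `G` -/
def DD {n : ℕ} (X : Finset (Fin n)) (G : Finset (Finset (Fin n))) (l : ℕ) :
    Finset (Finset (Fin n)) :=
  (powersetCard l X).filter (fun H => ∃ g ∈ G, Disjoint H g)

lemma DD_interp (n : ℕ) (X : Finset (Fin n)) (G : Finset (Finset (Fin n))) (k r l x : ℕ)
    (hG : ∀ g ∈ G, g ⊆ X ∧ g.card = k) (hX : X.card = r + k)
    (hxn : x + 1 ≤ n) (hl : 1 ≤ l) (hlr : l ≤ r)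
    (hrx : r ≤ x) (h1 : x.choose r ≤ G.card) (h2 : G.card ≤ (x+1).choose r) :
    x.choose l * x.choose (r-1) + (G.card - x.choose r) * x.choose (l-1)
      ≤ (DD X G l).card * x.choose (r-1) := by
  classical
  set A := G.image (fun g => X \ g) with hAdef
  have hAc : A.card = G.card := by
    rw [hAdef, card_image_of_injOn]
    intro g hg g' hg' h
    simp only at h
    rw [← Finset.sdiff_sdiff_eq_self (hG g hg).1, ← Finset.sdiff_sdiff_eq_self (hG g' hg').1, h]
  have hA : (A : Set (Finset (Fin n))).Sized r := by
    intro s hs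
    rw [mem_coe, hAdef, mem_image] at hs
    obtain ⟨g, hg, rfl⟩ := hs
    rw [card_sdiff_of_subset (hG g hg).1, (hG g hg).2, hX]; omega
  have := kk_interp n A r l x hA hxn hl hlr hrx (by rw [hAc]; exact h1) (by rw [hAc]; exact h2)
  rw [hAc] at this
  refine this.trans (Nat.mul_le_mul_right _ (card_le_card ?_))
  intro z hz
  rw [mem_shadow_iterate_iff_exists_sdiff] at hz
  obtain ⟨s, hs, hzs, hc⟩ := hz
  have hsr := hA hs
  rw [hAdef, mem_image] at hs
  obtain ⟨g, hg, rfl⟩ := hs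
  rw [DD, mem_filter, mem_powersetCard]
  refine ⟨⟨hzs.trans sdiff_subset, ?_⟩, g, hg, ?_⟩
  · rw [card_sdiff_of_subset hzs, hsr] at hc
    have := card_le_card hzs
    omega
  · exact Finset.disjoint_of_subset_left hzs sdiff_disjoint

end PartA

section PartB

open Finset
open scoped FinsetFamily

lemma choose_le_of_add_le (x : ℕ) : ∀ a b : ℕ, a ≤ b → a + b ≤ x → x.choose a ≤ x.choose b := by
  have key : ∀ a b : ℕ, a ≤ b → 2 * b ≤ x → x.choose a ≤ x.choose b := by
    intro a b hab
    induction b, hab using Nat.le_induction with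
    | base => intro _; exact le_rfl
    | succ b hab ih =>
      intro hb
      exact (ih (by omega)).trans (Nat.choose_le_succ_of_lt_half_left (by omega))
  intro a b hab habx
  rcases Nat.lt_or_ge x (2 * b) with h | h
  · rw [← Nat.choose_symm (show b ≤ x by omega)]
    exact key a (x - b) (by omega) (by omega)
  · exact key a b hab h

lemma find_level (r m : ℕ) : ∀ s : ℕ, 1 ≤ s → 1 ≤ m → m ≤ (r + s).choose r →
    ∃ j, j < s ∧ (r + j).choose r ≤ m ∧ m ≤ (r + j + 1).choose r := by
  intro s hs hm
  induction s, hs using Nat.le_induction with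
  | base => intro h; exact ⟨0, by omega, by simpa using hm, by simpa using h⟩
  | succ s hs ih =>
    intro h
    rcases Nat.lt_or_ge m ((r + s).choose r) with h1 | h1
    · obtain ⟨j, hj, h2, h3⟩ := ih h1.le
      exact ⟨j, by omega, h2, h3⟩
    · exact ⟨s, by omega, h1, h⟩

lemma DD_mono {n : ℕ} (X : Finset (Fin n)) (G G' : Finset (Finset (Fin n))) (l : ℕ)
    (h : G ⊆ G') : DD X G l ⊆ DD X G' l := by
  intro H hH
  rw [DD, mem_filter] at hH ⊢
  obtain ⟨h1, g, hg, h2⟩ := hH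
  exact ⟨h1, g, h hg, h2⟩

lemma level_seq (r l : ℕ) (hl : 2 ≤ l) (hlr : l ≤ r) : ∀ j, j ≤ l - 1 →
    r.choose l + (r + j).choose r ≤ (r + j).choose l + 1 := by
  intro j
  induction j with
  | zero => intro _; simp
  | succ j ih =>
    intro hj
    have h1 := ih (by omega)
    obtain ⟨l, rfl⟩ : ∃ l', l = l' + 1 := ⟨l - 1, by omega⟩
    obtain ⟨r, rfl⟩ : ∃ l', r = l' + 1 := ⟨r - 1, by omega⟩
    have e1 : (r + 1 + (j + 1)).choose (l+1) = (r + 1 + j).choose l + (r + 1 + j).choose (l+1) :=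
      Nat.choose_succ_succ' _ _
    have e2 : (r + 1 + (j + 1)).choose (r+1) = (r + 1 + j).choose r + (r + 1 + j).choose (r+1) :=
      Nat.choose_succ_succ' _ _
    have e3 : (r + 1 + j).choose r ≤ (r + 1 + j).choose l := by
      rw [Nat.choose_symm_of_eq_add (show r + 1 + j = r + (j + 1) by ring)]
      exact choose_le_of_add_le _ _ _ (by omega) (by omega)
    omega

lemma DD_local (n : ℕ) (X : Finset (Fin n)) (G : Finset (Finset (Fin n))) (k r l : ℕ)
    (hG : ∀ g ∈ G, g ⊆ X ∧ g.card = k) (hX : X.card = r + k)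
    (hxn : r + l ≤ n) (hl : 2 ≤ l) (hlr : l ≤ r)
    (h1 : 1 ≤ G.card) (h2 : G.card ≤ (r + (l - 1)).choose r) :
    r.choose l + G.card ≤ (DD X G l).card + 1 := by
  obtain ⟨j, hj, h3, h4⟩ := find_level r G.card (l-1) (by omega) h1 h2
  have h5 := DD_interp n X G k r l (r + j) hG hX (by omega) (by omega) hlr (by omega) h3 h4
  have h6 := level_seq r l hl hlr j (by omega)
  have e3 : (r + j).choose (r - 1) ≤ (r + j).choose (l - 1) := by
    rw [Nat.choose_symm_of_eq_add (show r + j = (r - 1) + (j + 1) by omega)]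
    exact choose_le_of_add_le _ _ _ (by omega) (by omega)
  have hpos : 0 < (r + j).choose (r - 1) := Nat.choose_pos (by omega)
  have h7 : ((r + j).choose l + (G.card - (r+j).choose r)) * (r + j).choose (r - 1)
      ≤ (DD X G l).card * (r + j).choose (r - 1) := by
    refine le_trans ?_ h5
    rw [add_mul]
    exact Nat.add_le_add_left (Nat.mul_le_mul_left _ e3) _
  have h8 := Nat.le_of_mul_le_mul_right h7 hpos
  omega

lemma end_ratio (x r l : ℕ) (hr : 1 ≤ r) (hl : 1 ≤ l) (hlr : l ≤ r) (h1 : r ≤ x) (h2 : x ≤ r + l - 1) :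
    r * x.choose r ≤ l * x.choose l := by
  obtain ⟨l, rfl⟩ : ∃ l', l = l' + 1 := ⟨l - 1, by omega⟩
  obtain ⟨r, rfl⟩ : ∃ l', r = l' + 1 := ⟨r - 1, by omega⟩
  obtain ⟨x, rfl⟩ : ∃ l', x = l' + 1 := ⟨x - 1, by omega⟩
  have e1 := Nat.add_one_mul_choose_eq x l
  have e2 := Nat.add_one_mul_choose_eq x r
  rw [mul_comm, ← e2, mul_comm (l+1), ← e1]
  apply Nat.mul_le_mul_left
  rw [Nat.choose_symm_of_eq_add (show x = r + (x - r) by omega)]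
  exact choose_le_of_add_le _ _ _ (by omega) (by omega)

lemma DD_ratio (n : ℕ) (X : Finset (Fin n)) (G : Finset (Finset (Fin n))) (k r l : ℕ)
    (hG : ∀ g ∈ G, g ⊆ X ∧ g.card = k) (hX : X.card = r + k)
    (hxn : r + l ≤ n) (hl : 2 ≤ l) (hlr : l ≤ r)
    (h2 : G.card ≤ (r + (l - 1)).choose r) :
    r * G.card ≤ l * (DD X G l).card := by
  rcases Nat.eq_zero_or_pos G.card with h0 | h1
  · simp [h0]
  obtain ⟨j, hj, h3, h4⟩ := find_level r G.card (l-1) (by omega) h1 h2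
  have h5 := DD_interp n X G k r l (r + j) hG hX (by omega) (by omega) hlr (by omega) h3 h4
  have h6 := end_ratio (r + j) r l (by omega) (by omega) hlr (by omega) (by omega)
  have h7 := end_ratio (r + j + 1) r l (by omega) (by omega) hlr (by omega) (by omega)
  have hpos : 0 < (r + j).choose (r - 1) := Nat.choose_pos (by omega)
  have p1 : (r + j + 1).choose l = (r + j).choose (l - 1) + (r + j).choose l := by
    obtain ⟨l, rfl⟩ : ∃ l', l = l' + 1 := ⟨l - 1, by omega⟩
    exact Nat.choose_succ_succ' _ _
  have p2 : (r + j + 1).choose r = (r + j).choose (r - 1) + (r + j).choose r := by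
    obtain ⟨r, rfl⟩ : ∃ l', r = l' + 1 := ⟨r - 1, by omega⟩
    exact Nat.choose_succ_succ' _ _
  rw [p1, p2] at h7
  rw [p2] at h4
  obtain ⟨θ, hθ⟩ : ∃ θ, G.card = (r + j).choose r + θ := ⟨_, (Nat.add_sub_of_le h3).symm⟩
  rw [hθ] at h4 h5 ⊢
  rw [Nat.add_sub_cancel_left] at h5
  set c := (r + j).choose (r - 1)
  set a := (r + j).choose (l - 1)
  set b := (r + j).choose l
  set d := (r + j).choose r
  have hθc : θ ≤ c := by omega
  clear_value c a b d
  obtain ⟨φ, rfl⟩ : ∃ φ, c = θ + φ := ⟨c - θ, by omega⟩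
  have : (r * (d + θ)) * (θ + φ) ≤ (l * (DD X G l).card) * (θ + φ) := by
    calc (r * (d + θ)) * (θ + φ) = (r * d) * φ + (r * (θ + φ + d)) * θ := by ring
      _ ≤ (l * b) * φ + (l * (a + b)) * θ := by gcongr
      _ = l * (b * (θ + φ) + θ * a) := by ring
      _ ≤ l * ((DD X G l).card * (θ + φ)) := by gcongr
      _ = _ := by ring
  exact Nat.le_of_mul_le_mul_right this hpos

lemma excl_bound {n : ℕ} (F G : Finset (Finset (Fin n))) (S : Finset (Fin n)) (k : ℕ)
    (hcard : ∀ A ∈ F, A.card = k) (hint : ∀ A ∈ F, ∀ B ∈ F, (A ∩ B).Nonempty)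
    (hG : G ⊆ F) (hGS : ∀ g ∈ G, Disjoint g S) :
    (F.filter (fun A => S ⊆ A)).card + (DD (univ \ S) G (k - S.card)).card
      ≤ (n - S.card).choose (k - S.card) := by
  classical
  have h0 : (n - S.card).choose (k - S.card) = (powersetCard (k - S.card) (univ \ S)).card := by
    rw [card_powersetCard, card_sdiff_of_subset (subset_univ _), card_univ, Fintype.card_fin]
  have h1 : (F.filter (fun A => S ⊆ A)).card
      = ((F.filter (fun A => S ⊆ A)).image (fun A => A \ S)).card := by
    rw [card_image_of_injOn]
    intro A hA B hB h
    simp only [coe_filter, Set.mem_ofPred_eq] at hA hB h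
    rw [← Finset.sdiff_union_of_subset hA.2, ← Finset.sdiff_union_of_subset hB.2, h]
  rw [h0, h1, ← card_union_of_disjoint]
  · apply card_le_card
    apply union_subset
    · intro y hy
      rw [mem_image] at hy
      obtain ⟨A, hA, rfl⟩ := hy
      rw [mem_filter] at hA
      rw [mem_powersetCard]
      exact ⟨sdiff_subset_sdiff (subset_univ _) le_rfl, by rw [card_sdiff_of_subset hA.2, hcard A hA.1]⟩
    · exact filter_subset _ _
  · rw [disjoint_left]
    intro y hy hy'
    rw [mem_image] at hy
    obtain ⟨A, hA, rfl⟩ := hy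
    rw [mem_filter] at hA
    rw [DD, mem_filter] at hy'
    obtain ⟨_, g, hg, hd⟩ := hy'
    obtain ⟨x, hx⟩ := hint A hA.1 g (hG hg)
    rw [mem_inter] at hx
    rw [disjoint_left] at hd
    exact hd (mem_sdiff.mpr ⟨hx.1, fun h => (disjoint_left.mp (hGS g hg)) hx.2 h⟩) hx.2

lemma avg {n : ℕ} (F : Finset (Finset (Fin n))) (X : Finset (Fin n)) (t : ℕ) (ht : t ≤ X.card)
    (b : ℝ) (hb : ∀ T, T ⊆ X → T.card = t → b < ((F.filter (fun A => T ⊆ A)).card : ℝ)) :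
    (X.card.choose t : ℝ) * b < ∑ A ∈ F, ((A ∩ X).card.choose t : ℝ) := by
  classical
  have h1 : ∑ T ∈ powersetCard t X, (F.filter (fun A => T ⊆ A)).card
      = ∑ A ∈ F, (A ∩ X).card.choose t := by
    have := sum_card_bipartiteAbove_eq_sum_card_bipartiteBelow (s := powersetCard t X) (t := F)
      (fun T A => T ⊆ A)
    simp only [bipartiteAbove, bipartiteBelow] at this
    rw [this]
    apply sum_congr rfl
    intro A _
    rw [← card_powersetCard]
    congr 1
    ext T
    simp only [mem_filter, mem_powersetCard, subset_inter_iff]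
    tauto
  have h2 : ∑ T ∈ powersetCard t X, b < ∑ T ∈ powersetCard t X, ((F.filter (fun A => T ⊆ A)).card : ℝ) := by
    apply sum_lt_sum_of_nonempty
    · rwa [powersetCard_nonempty]
    · intro T hT
      rw [mem_powersetCard] at hT
      exact hb T hT.1 hT.2
  rw [sum_const, card_powersetCard, nsmul_eq_mul] at h2
  refine h2.trans_le ?_
  exact_mod_cast h1.le

lemma exists_T {n : ℕ} (G : Finset (Finset (Fin n))) (X : Finset (Fin n)) (k t : ℕ)
    (hG : ∀ g ∈ G, g ⊆ X ∧ g.card = k) (hne : G.Nonempty)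
    (hc : k.choose t < (X.card - k).choose t) :
    ∃ T, T ⊆ X ∧ T.card = t ∧
      (G.filter (fun A => T ⊆ A)).card < (G.filter (fun A => Disjoint A T)).card := by
  classical
  have h1 : ∑ T ∈ powersetCard t X, (G.filter (fun A => T ⊆ A)).card = ∑ A ∈ G, k.choose t := by
    have := sum_card_bipartiteAbove_eq_sum_card_bipartiteBelow (s := powersetCard t X) (t := G)
      (fun T A => T ⊆ A)
    simp only [bipartiteAbove, bipartiteBelow] at this
    rw [this]
    apply sum_congr rfl
    intro A hA
    rw [← (hG A hA).2, ← card_powersetCard]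
    congr 1
    ext T
    simp only [mem_filter, mem_powersetCard]
    have := (hG A hA).1
    exact ⟨fun h => ⟨h.2, h.1.2⟩, fun h => ⟨⟨h.1.trans this, h.2⟩, h.1⟩⟩
  have h2 : ∑ T ∈ powersetCard t X, (G.filter (fun A => Disjoint A T)).card
      = ∑ A ∈ G, (X.card - k).choose t := by
    have := sum_card_bipartiteAbove_eq_sum_card_bipartiteBelow (s := powersetCard t X) (t := G)
      (fun T A => Disjoint A T)
    simp only [bipartiteAbove, bipartiteBelow] at this
    rw [this]
    apply sum_congr rfl
    intro A hA
    rw [← (hG A hA).2, ← card_sdiff_of_subset (hG A hA).1, ← card_powersetCard]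
    congr 1
    ext T
    simp only [mem_filter, mem_powersetCard, subset_sdiff, disjoint_comm (a := A)]
    tauto
  have h3 : ∑ T ∈ powersetCard t X, (G.filter (fun A => T ⊆ A)).card
      < ∑ T ∈ powersetCard t X, (G.filter (fun A => Disjoint A T)).card := by
    rw [h1, h2]
    exact sum_lt_sum_of_nonempty hne (fun _ _ => hc)
  obtain ⟨T, hT, h4⟩ := exists_lt_of_sum_lt h3
  rw [mem_powersetCard] at hT
  exact ⟨T, hT.1, hT.2, h4⟩

lemma case_local (n k t : ℕ) (ht : 2 ≤ t) (htk : 4 * t + 8 ≤ k)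
    (hn : 2 * k + 14 * t ≤ n)
    (F : Finset (Finset (Fin n)))
    (hcard : ∀ A ∈ F, A.card = k)
    (hint : ∀ A ∈ F, ∀ B ∈ F, (A ∩ B).Nonempty) (i : Fin n)
    (hg1 : 1 ≤ (F.filter (fun A => i ∉ A)).card)
    (hg2 : (F.filter (fun A => i ∉ A)).card ≤ (n - 2 * t - 3).choose (k - 2 * t - 2)) :
    ∃ T : Finset (Fin n), T.card = t ∧
      (F.filter (fun A => T ⊆ A)).card + (n - t - k - 1).choose (k - t - 1) ≤
        (n - t - 1).choose (k - t - 1) := by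
  classical
  set G := F.filter (fun A => i ∉ A) with hGdef
  have hX : (univ.erase i : Finset (Fin n)).card = n - 1 := by
    rw [card_erase_of_mem (mem_univ _), card_univ, Fintype.card_fin]
  obtain ⟨T, hTX, hT, hlt⟩ := exists_T G (univ.erase i) k t (by
      intro g hg
      rw [hGdef, mem_filter] at hg
      refine ⟨?_, hcard g hg.1⟩
      intro x hx
      rw [mem_erase]
      exact ⟨fun h => hg.2 (h ▸ hx), mem_univ _⟩) (card_pos.mp hg1) (by
      rw [hX]
      obtain ⟨t, rfl⟩ : ∃ t', t = t' + 1 := ⟨t - 1, by omega⟩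
      calc k.choose (t+1) < k.choose t + k.choose (t+1) := by
            have : 0 < k.choose t := Nat.choose_pos (by omega)
            omega
        _ = (k+1).choose (t+1) := (Nat.choose_succ_succ' _ _).symm
        _ ≤ _ := Nat.choose_le_choose _ (by omega))
  have hiT : i ∉ T := fun h => by simpa using hTX h
  refine ⟨T, hT, ?_⟩
  set G' := G.filter (fun A => Disjoint A T) with hG'
  set S := insert i T with hS
  have hSc : S.card = t + 1 := by rw [hS, card_insert_of_notMem hiT, hT]
  have hGF : G' ⊆ F := (filter_subset _ _).trans (filter_subset _ _)
  have hGS : ∀ g ∈ G', Disjoint g S := by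
    intro g hg
    rw [hG', mem_filter, hGdef, mem_filter] at hg
    rw [hS, disjoint_insert_right]
    exact ⟨hg.1.2, hg.2⟩
  have h1 := excl_bound F G' S k hcard hint hGF hGS
  have hXc : (univ \ S : Finset (Fin n)).card = (n - 1 - t - k) + k := by
    rw [card_sdiff_of_subset (subset_univ _), card_univ, Fintype.card_fin, hSc]; omega
  have hG'1 : 1 ≤ G'.card := by omega
  have h2 := DD_local n (univ \ S) G' k (n - 1 - t - k) (k - (t+1)) (by
      intro g hg
      refine ⟨?_, hcard g (hGF hg)⟩
      rw [subset_sdiff]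
      exact ⟨subset_univ _, hGS g hg⟩) hXc (by omega) (by omega) (by omega) hG'1 (by
      have e1 : G'.card ≤ G.card := card_filter_le _ _
      refine e1.trans (hg2.trans ?_)
      rw [Nat.choose_symm_of_eq_add (show n - 1 - t - k + (k - (t+1) - 1) = n - 1 - t - k + (k - (t+1) - 1) from rfl)]
      rw [show n - 1 - t - k + (k - (t+1) - 1) = n - 2 * t - 3 by omega]
      exact choose_le_of_add_le _ _ _ (by omega) (by omega))
  rw [hSc] at h1
  have h3 : (F.filter (fun A => T ⊆ A)).card
      ≤ (F.filter (fun A => S ⊆ A)).card + (G.filter (fun A => T ⊆ A)).card := by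
    refine le_trans (card_le_card ?_) (card_union_le _ _)
    intro A hA
    rw [mem_filter] at hA
    rw [mem_union, mem_filter, mem_filter, hGdef, mem_filter]
    by_cases hi : i ∈ A
    · left
      exact ⟨hA.1, by rw [hS, insert_subset_iff]; exact ⟨hi, hA.2⟩⟩
    · right; exact ⟨⟨hA.1, hi⟩, hA.2⟩
  rw [show n - t - k - 1 = n - 1 - t - k by omega, show k - t - 1 = k - (t + 1) by omega,
    show n - t - 1 = n - (t + 1) by omega]
  omega

end PartB

section PartC

open Finset
open scoped FinsetFamily

section
variable {n : ℕ}

/-- members avoiding `i` -/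
def av (F : Finset (Finset (Fin n))) (i : Fin n) : Finset (Finset (Fin n)) :=
  F.filter (fun A => i ∉ A)

lemma av_prop (F : Finset (Finset (Fin n))) (k : ℕ) (hcard : ∀ A ∈ F, A.card = k) (i : Fin n) :
    ∀ g ∈ av F i, g ⊆ univ \ {i} ∧ g.card = k := by
  intro g hg
  rw [av, mem_filter] at hg
  refine ⟨?_, hcard g hg.1⟩
  rw [subset_sdiff, disjoint_singleton_right]
  exact ⟨subset_univ _, hg.2⟩

lemma card_X (k : ℕ) (hk : k + 1 ≤ n) (i : Fin n) :
    (univ \ {i} : Finset (Fin n)).card = (n - 1 - k) + k := by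
  rw [card_sdiff_of_subset (subset_univ _), card_univ, Fintype.card_fin, card_singleton]; omega

lemma F_split (F : Finset (Finset (Fin n))) (i : Fin n) :
    F.card = (F.filter (fun A => {i} ⊆ A)).card + (av F i).card := by
  rw [← card_filter_add_card_filter_not (s := F) (fun A => {i} ⊆ A), av]
  simp

lemma F_total (F : Finset (Finset (Fin n))) (k : ℕ) (hcard : ∀ A ∈ F, A.card = k)
    (hint : ∀ A ∈ F, ∀ B ∈ F, (A ∩ B).Nonempty) (i : Fin n) :
    (F.filter (fun A => {i} ⊆ A)).card + (DD (univ \ {i}) (av F i) (k-1)).card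
      ≤ (n-1).choose (k-1) := by
  have h := excl_bound F (av F i) {i} k hcard hint (filter_subset _ _) (by
    intro g hg
    rw [av, mem_filter] at hg
    rw [disjoint_singleton_right]
    exact hg.2)
  rw [card_singleton] at h
  exact h

lemma exc_mid (F : Finset (Finset (Fin n))) (k : ℕ) (hk : 4 ≤ k) (hn : 2 * k + 1 ≤ n)
    (hcard : ∀ A ∈ F, A.card = k) (i : Fin n)
    (h1 : (n-3).choose (k-2) ≤ (av F i).card) (h2 : (av F i).card ≤ (n-2).choose (k-1)) :
    (n-3).choose (k-1) * (n-3).choose (k-1) + ((av F i).card - (n-3).choose (k-2)) * (n-3).choose (k-2)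
      ≤ (DD (univ \ {i}) (av F i) (k-1)).card * (n-3).choose (k-1) := by
  have e1 : (n-3).choose (n-1-k) = (n-3).choose (k-2) :=
    Nat.choose_symm_of_eq_add (by omega)
  have e2 : (n-3+1).choose (n-1-k) = (n-2).choose (k-1) := by
    rw [show n - 3 + 1 = n - 2 by omega]
    exact Nat.choose_symm_of_eq_add (by omega)
  have e3 : (n-3).choose (n-1-k-1) = (n-3).choose (k-1) :=
    Nat.choose_symm_of_eq_add (by omega)
  have := DD_interp n (univ \ {i}) (av F i) k (n-1-k) (k-1) (n-3) (av_prop F k hcard i)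
    (card_X k (by omega) i) (by omega) (by omega) (by omega) (by omega) (by rw [e1]; exact h1)
    (by rw [e2]; exact h2)
  rw [e1, e3, show k - 1 - 1 = k - 2 by omega] at this
  exact this

lemma exc_low (F : Finset (Finset (Fin n))) (k : ℕ) (hk : 4 ≤ k) (hn : 2 * k + 1 ≤ n)
    (hcard : ∀ A ∈ F, A.card = k) (i : Fin n)
    (h1 : (n-4).choose (k-3) ≤ (av F i).card) (h2 : (av F i).card ≤ (n-3).choose (k-2)) :
    (n-3).choose (k-1) + (av F i).card
      ≤ (DD (univ \ {i}) (av F i) (k-1)).card + (n-3).choose (k-2) := by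
  have e1 : (n-4).choose (n-1-k) = (n-4).choose (k-3) :=
    Nat.choose_symm_of_eq_add (by omega)
  have e2 : (n-4+1).choose (n-1-k) = (n-3).choose (k-2) := by
    rw [show n - 4 + 1 = n - 3 by omega]
    exact Nat.choose_symm_of_eq_add (by omega)
  have e3 : (n-4).choose (n-1-k-1) = (n-4).choose (k-2) :=
    Nat.choose_symm_of_eq_add (by omega)
  have := DD_interp n (univ \ {i}) (av F i) k (n-1-k) (k-1) (n-4) (av_prop F k hcard i)
    (card_X k (by omega) i) (by omega) (by omega) (by omega) (by omega) (by rw [e1]; exact h1)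
    (by rw [e2]; exact h2)
  rw [e1, e3, show k - 1 - 1 = k - 2 by omega, ← add_mul] at this
  have h3 := Nat.le_of_mul_le_mul_right this (Nat.choose_pos (by omega))
  have p1 : (n-3).choose (k-1) = (n-4).choose (k-2) + (n-4).choose (k-1) := by
    rw [show n - 3 = n - 4 + 1 by omega, show k - 1 = k - 2 + 1 by omega]
    exact Nat.choose_succ_succ' _ _
  have p2 : (n-3).choose (k-2) = (n-4).choose (k-3) + (n-4).choose (k-2) := by
    rw [show n - 3 = n - 4 + 1 by omega, show k - 2 = k - 3 + 1 by omega]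
    exact Nat.choose_succ_succ' _ _
  omega

lemma exc_ratio (F : Finset (Finset (Fin n))) (k : ℕ) (hk : 4 ≤ k) (hn : 2 * k + 1 ≤ n)
    (hcard : ∀ A ∈ F, A.card = k) (i : Fin n)
    (h2 : (av F i).card ≤ (n-3).choose (k-2)) :
    (n-1-k) * (av F i).card ≤ (k-1) * (DD (univ \ {i}) (av F i) (k-1)).card := by
  apply DD_ratio n (univ \ {i}) (av F i) k (n-1-k) (k-1) (av_prop F k hcard i)
    (card_X k (by omega) i) (by omega) (by omega) (by omega)
  rw [Nat.choose_symm_of_eq_add (show n-1-k + (k-1-1) = n-1-k + (k-1-1) from rfl),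
    show n-1-k + (k-1-1) = n-3 by omega]
  exact h2

lemma DD_lov (X : Finset (Fin n)) (G : Finset (Finset (Fin n))) (k r l x : ℕ)
    (hG : ∀ g ∈ G, g ⊆ X ∧ g.card = k) (hX : X.card = r + k)
    (hxn : x + 1 ≤ n) (hl : 1 ≤ l) (hlr : l ≤ r)
    (hrx : r ≤ x) (h1 : x.choose r ≤ G.card) :
    x.choose l ≤ (DD X G l).card := by
  obtain ⟨G', hG', hc⟩ := exists_subset_card_eq h1
  have := DD_interp n X G' k r l x (fun g hg => hG g (hG' hg)) hX hxn hl hlr hrx hc.ge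
    (by rw [hc]; exact Nat.choose_le_choose _ (by omega))
  have h2 : x.choose l * x.choose (r-1) ≤ (DD X G' l).card * x.choose (r-1) := by omega
  exact (Nat.le_of_mul_le_mul_right h2 (Nat.choose_pos (by omega))).trans
    (card_le_card (DD_mono X G' G l hG'))

def Good (k : ℕ) (F : Finset (Finset (Fin n))) : Prop :=
  2 * ((n-3).choose (k-1) : ℝ) * F.card + (((n-3).choose (k-1) : ℝ) - (n-3).choose (k-2)) *
    (2 * ((n-3).choose (k-1) : ℝ) - (n-3).choose (k-2)) ≤
    2 * ((n-3).choose (k-1) : ℝ) * (n-1).choose (k-1)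

lemma WY (k : ℕ) (hk : 4 ≤ k) (hn : 2 * k + 1 ≤ n) :
    0 < (n-3).choose (k-2) ∧ (n-3).choose (k-2) ≤ (n-3).choose (k-1) ∧
    (n-2).choose (k-1) = (n-3).choose (k-2) + (n-3).choose (k-1) ∧
    2 * (n-4).choose (k-3) ≤ (n-3).choose (k-2) := by
  refine ⟨Nat.choose_pos (by omega), choose_le_of_add_le _ _ _ (by omega) (by omega), ?_, ?_⟩
  · rw [show n - 2 = n - 3 + 1 by omega, show k - 1 = k - 2 + 1 by omega]
    exact Nat.choose_succ_succ' _ _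
  · have p2 : (n-3).choose (k-2) = (n-4).choose (k-3) + (n-4).choose (k-2) := by
      rw [show n - 3 = n - 4 + 1 by omega, show k - 2 = k - 3 + 1 by omega]
      exact Nat.choose_succ_succ' _ _
    have := choose_le_of_add_le (n-4) (k-3) (k-2) (by omega) (by omega)
    omega

lemma good_of_mid (F : Finset (Finset (Fin n))) (k : ℕ) (hk : 4 ≤ k) (hn : 2 * k + 1 ≤ n)
    (hcard : ∀ A ∈ F, A.card = k)
    (hint : ∀ A ∈ F, ∀ B ∈ F, (A ∩ B).Nonempty) (i : Fin n)
    (h1 : (n-3).choose (k-2) ≤ 2 * (av F i).card)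
    (h2 : 2 * (av F i).card ≤ 3 * (n-3).choose (k-2)) : Good k F := by
  obtain ⟨hY, hYW, hP, hhalf⟩ := WY k hk hn
  have ht := F_total F k hcard hint i
  have hs := F_split F i
  rcases Nat.lt_or_ge (av F i).card ((n-3).choose (k-2)) with h | h
  · have := exc_low F k hk hn hcard i (by omega) h.le
    have h3 : F.card + (n-3).choose (k-1) ≤ (n-1).choose (k-1) + (n-3).choose (k-2) := by omega
    unfold Good
    have h4 : (F.card : ℝ) + (n-3).choose (k-1) ≤ (n-1).choose (k-1) + (n-3).choose (k-2) := by
      exact_mod_cast h3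
    have hY' : (0:ℝ) < (n-3).choose (k-2) := by exact_mod_cast hY
    have hYW' : ((n-3).choose (k-2) : ℝ) ≤ (n-3).choose (k-1) := by exact_mod_cast hYW
    set W : ℝ := ((n-3).choose (k-1) : ℝ)
    set Y : ℝ := ((n-3).choose (k-2) : ℝ)
    nlinarith [mul_nonneg (sub_nonneg.mpr hYW') hY'.le, mul_nonneg (sub_nonneg.mpr h4) (hY'.le.trans hYW')]
  · have := exc_mid F k hk hn hcard i h (by omega)
    obtain ⟨θ, hθ⟩ : ∃ θ, (av F i).card = (n-3).choose (k-2) + θ := ⟨_, (Nat.add_sub_of_le h).symm⟩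
    rw [hθ] at this h2 hs
    rw [Nat.add_sub_cancel_left] at this
    set e := (DD (univ \ {i}) (av F i) (k-1)).card
    have h3 : F.card + e ≤ (n-1).choose (k-1) + ((n-3).choose (k-2) + θ) := by omega
    unfold Good
    have h4 : (F.card : ℝ) + e ≤ (n-1).choose (k-1) + ((n-3).choose (k-2) + θ) := by
      exact_mod_cast h3
    have h5 : ((n-3).choose (k-1) : ℝ) * (n-3).choose (k-1) + θ * (n-3).choose (k-2)
      ≤ e * (n-3).choose (k-1) := by exact_mod_cast this
    have h6 : 2 * (((n-3).choose (k-2) : ℝ) + θ) ≤ 3 * (n-3).choose (k-2) := by exact_mod_cast h2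
    have hY' : (0:ℝ) < (n-3).choose (k-2) := by exact_mod_cast hY
    have hYW' : ((n-3).choose (k-2) : ℝ) ≤ (n-3).choose (k-1) := by exact_mod_cast hYW
    set W : ℝ := ((n-3).choose (k-1) : ℝ)
    set Y : ℝ := ((n-3).choose (k-2) : ℝ)
    nlinarith [mul_nonneg (sub_nonneg.mpr hYW') (sub_nonneg.mpr h6),
      mul_nonneg (sub_nonneg.mpr h4) (hY'.le.trans hYW')]

lemma cross (F : Finset (Finset (Fin n))) (k : ℕ) (hk : 4 ≤ k) (hn : 2 * k + 1 ≤ n)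
    (hcard : ∀ A ∈ F, A.card = k)
    (hint : ∀ A ∈ F, ∀ B ∈ F, (A ∩ B).Nonempty) (i j : Fin n) (hij : i ≠ j)
    (hB : (n-3).choose (k-2) ≤ (F.filter (fun A => i ∈ A ∧ j ∉ A)).card) :
    (F.filter (fun A => i ∉ A ∧ j ∈ A)).card ≤ (n-3).choose (k-2) := by
  classical
  obtain ⟨hY, hYW, hP, hhalf⟩ := WY k hk hn
  set X : Finset (Fin n) := univ \ {i, j} with hX
  have hXc : X.card = (n - 1 - k) + (k-1) := by
    rw [hX, card_sdiff_of_subset (subset_univ _), card_univ, Fintype.card_fin, card_pair hij]; omega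
  set GB := (F.filter (fun A => i ∈ A ∧ j ∉ A)).image (fun A => A.erase i) with hGB
  set GA := (F.filter (fun A => i ∉ A ∧ j ∈ A)).image (fun A => A.erase j) with hGA
  have cB : GB.card = (F.filter (fun A => i ∈ A ∧ j ∉ A)).card := by
    rw [hGB, card_image_of_injOn]
    intro A hA B hB h
    simp only [coe_filter, Set.mem_ofPred_eq] at hA hB h
    rw [← insert_erase hA.2.1, ← insert_erase hB.2.1, h]
  have cA : GA.card = (F.filter (fun A => i ∉ A ∧ j ∈ A)).card := by
    rw [hGA, card_image_of_injOn]
    intro A hA B hB h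
    simp only [coe_filter, Set.mem_ofPred_eq] at hA hB h
    rw [← insert_erase hA.2.2, ← insert_erase hB.2.2, h]
  have pB : ∀ g ∈ GB, g ⊆ X ∧ g.card = k - 1 := by
    intro g hg
    rw [hGB, mem_image] at hg
    obtain ⟨A, hA, rfl⟩ := hg
    rw [mem_filter] at hA
    refine ⟨?_, by rw [card_erase_of_mem hA.2.1, hcard A hA.1]⟩
    intro x hx
    rw [mem_erase] at hx
    simp only [hX, mem_sdiff, mem_univ, true_and, mem_insert, mem_singleton, not_or]
    exact ⟨hx.1, fun h => hA.2.2 (h ▸ hx.2)⟩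
  have pA : ∀ g ∈ GA, g ⊆ X ∧ g.card = k - 1 := by
    intro g hg
    rw [hGA, mem_image] at hg
    obtain ⟨A, hA, rfl⟩ := hg
    rw [mem_filter] at hA
    refine ⟨?_, by rw [card_erase_of_mem hA.2.2, hcard A hA.1]⟩
    intro x hx
    rw [mem_erase] at hx
    simp only [hX, mem_sdiff, mem_univ, true_and, mem_insert, mem_singleton, not_or]
    exact ⟨fun h => hA.2.1 (h ▸ hx.2), hx.1⟩
  have e1 : (n-3).choose (n-1-k) = (n-3).choose (k-2) :=
    Nat.choose_symm_of_eq_add (by omega)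
  have h1 := DD_lov X GB (k-1) (n-1-k) (k-1) (n-3) pB hXc (by omega) (by omega) (by omega)
    (by omega) (by rw [e1, cB]; exact hB)
  have h2 : GA.card + (DD X GB (k-1)).card ≤ (n-2).choose (k-1) := by
    have : (n-2).choose (k-1) = (powersetCard (k-1) X).card := by
      rw [card_powersetCard, hXc]
      congr 1; omega
    rw [this, ← card_union_of_disjoint]
    · apply card_le_card
      apply union_subset
      · intro g hg
        rw [mem_powersetCard]; exact pA g hg
      · exact filter_subset _ _
    · rw [disjoint_left]
      intro g hg hg'
      rw [DD, mem_filter] at hg'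
      obtain ⟨_, b, hb, hd⟩ := hg'
      have hgX := (pA g hg).1
      have hbX := (pB b hb).1
      rw [hGA, mem_image] at hg
      obtain ⟨A, hA, rfl⟩ := hg
      rw [hGB, mem_image] at hb
      obtain ⟨B, hB, rfl⟩ := hb
      rw [mem_filter] at hA hB
      obtain ⟨x, hx⟩ := hint A hA.1 B hB.1
      rw [mem_inter] at hx
      rw [disjoint_left] at hd
      apply hd (a := x)
      · rw [mem_erase]; exact ⟨fun h => hB.2.2 (h ▸ hx.2), hx.1⟩
      · rw [mem_erase]; exact ⟨fun h => hA.2.1 (h ▸ hx.1), hx.2⟩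
  omega

end

end PartC

section PartD

open Finset
open scoped FinsetFamily

section
variable {n : ℕ}

/-- number of elements of `G` with value at most `p` -/
def cnt (G : Finset (Fin n)) (p : ℕ) : ℕ := (G.filter (fun x => x.val ≤ p)).card

/-- left-shifted family -/
def Stable (F : Finset (Finset (Fin n))) : Prop :=
  ∀ i j : Fin n, j < i → ∀ A ∈ F, i ∈ A → j ∉ A → insert j (A.erase i) ∈ F

lemma dominate (F : Finset (Finset (Fin n))) (hF : Stable F) : ∀ m : ℕ, ∀ A B : Finset (Fin n),
    (A \ B).card = m → A ∈ F → A.card = B.card → (∀ p, cnt A p ≤ cnt B p) → B ∈ F := by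
  classical
  intro m
  induction m with
  | zero =>
    intro A B h hA hc _
    rw [card_eq_zero, sdiff_eq_empty_iff_subset] at h
    rw [← eq_of_subset_of_card_le h hc.ge]; exact hA
  | succ m ih =>
    intro A B h hA hc hd
    have hne : (A \ B).Nonempty := by rw [← card_pos]; omega
    obtain ⟨i, hi, hmin⟩ := exists_min_image (A \ B) (fun x => x) hne
    rw [mem_sdiff] at hi
    have hj : ∃ j, j ∈ B ∧ j ∉ A ∧ j.val ≤ i.val := by
      by_contra hcon
      push Not at hcon
      have hss : B.filter (fun x => x.val ≤ i.val) ⊂ A.filter (fun x => x.val ≤ i.val) := by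
        rw [ssubset_iff_of_subset]
        · exact ⟨i, by simp [hi.1], by simp [hi.2]⟩
        · intro x hx
          rw [mem_filter] at hx ⊢
          refine ⟨?_, hx.2⟩
          by_contra hxA
          have := hcon x hx.1 hxA
          omega
      have h1 := card_lt_card hss
      have h2 := hd i.val
      simp only [cnt] at h2
      omega
    obtain ⟨j, hjB, hjA, hji⟩ := hj
    have hjne : j ≠ i := fun h => hjA (h ▸ hi.1)
    have hjlt : j < i := lt_of_le_of_ne hji hjne
    have hA' := hF i j hjlt A hA hi.1 hjA
    have hjAe : j ∉ A.erase i := fun h => hjA (mem_of_mem_erase h)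
    apply ih (insert j (A.erase i)) B _ hA'
    · rw [card_insert_of_notMem hjAe, card_erase_of_mem hi.1, ← hc]
      have : 0 < A.card := card_pos.mpr ⟨i, hi.1⟩
      omega
    · intro p
      rcases Nat.lt_or_ge p i.val with hp | hp
      · rcases Nat.lt_or_ge p j.val with hpj | hpj
        · refine le_trans (card_le_card ?_) (hd p)
          intro x hx
          rw [mem_filter, mem_insert, mem_erase] at hx
          rw [mem_filter]
          rcases hx with ⟨rfl | hx, hxp⟩
          · omega
          · exact ⟨hx.2, hxp⟩
        · apply card_le_card
          intro x hx
          rw [mem_filter, mem_insert, mem_erase] at hx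
          rw [mem_filter]
          rcases hx with ⟨rfl | hx, hxp⟩
          · exact ⟨hjB, hxp⟩
          · refine ⟨?_, hxp⟩
            by_contra hxB
            have := hmin x (mem_sdiff.mpr ⟨hx.2, hxB⟩)
            have : i.val ≤ x.val := this
            omega
      · have e : cnt (insert j (A.erase i)) p = cnt A p := by
          unfold cnt
          have : (insert j (A.erase i)).filter (fun x => x.val ≤ p)
              = insert j ((A.filter (fun x => x.val ≤ p)).erase i) := by
            ext x
            simp only [mem_filter, mem_insert, mem_erase]
            constructor
            · rintro ⟨rfl | h, h'⟩
              · left; rfl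
              · right; exact ⟨h.1, h.2, h'⟩
            · rintro (rfl | h)
              · exact ⟨Or.inl rfl, by omega⟩
              · exact ⟨Or.inr ⟨h.1, h.2.1⟩, h.2.2⟩
          have hmem : i ∈ A.filter (fun x => x.val ≤ p) := by simp [hi.1, hp]
          rw [this, card_insert_of_notMem (by simp [hjA]), card_erase_of_mem hmem]
          have : 0 < (A.filter (fun x => x.val ≤ p)).card := card_pos.mpr ⟨i, hmem⟩
          omega
        rw [e]; exact hd p
    · have : (insert j (A.erase i)) \ B = (A \ B).erase i := by
        ext x
        simp only [mem_sdiff, mem_insert, mem_erase]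
        constructor
        · rintro ⟨rfl | h, h'⟩
          · exact absurd hjB h'
          · exact ⟨h.1, h.2, h'⟩
        · rintro ⟨h1, h2, h3⟩
          exact ⟨Or.inr ⟨h1, h2⟩, h3⟩
      rw [this, card_erase_of_mem (mem_sdiff.mpr hi), h]; omega

lemma hits (F : Finset (Finset (Fin n))) (k : ℕ) (hn : 2 * k ≤ n) (hF : Stable F)
    (hcard : ∀ A ∈ F, A.card = k) (hint : ∀ A ∈ F, ∀ B ∈ F, (A ∩ B).Nonempty)
    (G : Finset (Fin n)) (hG : G ∈ F) (h0 : ∀ x ∈ G, x.val ≠ 0) :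
    ∃ p, 2 * cnt G p = p + 2 := by
  classical
  by_contra hno
  push Not at hno
  have hb : ∀ p, 2 * cnt G p ≤ p + 1 := by
    intro p
    induction p with
    | zero =>
      have : cnt G 0 = 0 := by
        unfold cnt
        rw [card_eq_zero, filter_eq_empty_iff]
        intro x hx h
        exact h0 x hx (by omega)
      omega
    | succ p ih =>
      have h1 : cnt G (p+1) ≤ cnt G p + 1 := by
        unfold cnt
        have : G.filter (fun x => x.val ≤ p + 1) ⊆
            G.filter (fun x => x.val ≤ p) ∪ (univ.filter (fun x : Fin n => x.val = p + 1)) := by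
          intro x hx
          simp only [mem_union, mem_filter, mem_univ, true_and] at hx ⊢
          by_cases h : x.val = p + 1
          · right; exact h
          · left; exact ⟨hx.1, by omega⟩
        have h2 := (card_le_card this).trans (card_union_le _ _)
        have h3 : (univ.filter (fun x : Fin n => x.val = p + 1)).card ≤ 1 := by
          rw [card_le_one]
          intro a ha b hb
          simp only [mem_filter, mem_univ, true_and] at ha hb
          exact Fin.ext (by omega)
        omega
      have := hno (p+1)
      omega
  have hbk : ∀ p, cnt G p ≤ k := fun p => by
    rw [← hcard G hG]; exact card_filter_le _ _
  -- parity sets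
  have key : ∀ c : ℕ, c ≤ 1 → ∃ B : Finset (Fin n), B ∈ F ∧ ∀ x ∈ B, x.val % 2 = c := by
    intro c hc
    let f : Fin k → Fin n := fun j => ⟨2 * j.val + c, by omega⟩
    have finj : Function.Injective f := by
      intro a b h
      have : 2 * a.val + c = 2 * b.val + c := congrArg Fin.val h
      exact Fin.ext (by omega)
    refine ⟨univ.image f, ?_, ?_⟩
    · apply dominate F hF _ G _ rfl hG
      · rw [card_image_of_injective _ finj, card_univ, Fintype.card_fin, hcard G hG]
      · intro p
        have h1 := hb p
        have h2 := hbk p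
        set m := cnt G p with hm
        have : m = ((univ.filter (fun j : Fin k => j.val < m)).image f).card := by
          rw [card_image_of_injective _ finj]
          have := (below_initSeg k 0 m h2).2
          exact this.symm
        rw [this]
        apply card_le_card
        intro x hx
        rw [mem_image] at hx
        obtain ⟨j, hj, rfl⟩ := hx
        rw [mem_filter] at hj ⊢
        refine ⟨mem_image_of_mem _ (mem_univ _), ?_⟩
        change 2 * j.val + c ≤ p
        omega
    · intro x hx
      rw [mem_image] at hx
      obtain ⟨j, _, rfl⟩ := hx
      change (2 * j.val + c) % 2 = c
      omega
  obtain ⟨P, hP, hP'⟩ := key 0 (by omega)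
  obtain ⟨Q, hQ, hQ'⟩ := key 1 (by omega)
  obtain ⟨x, hx⟩ := hint P hP Q hQ
  rw [mem_inter] at hx
  have := hP' x hx.1
  have := hQ' x hx.2
  omega

/-- first hitting time -/
noncomputable def pf (U : Finset (Fin n)) : ℕ := sInf {p | 2 * cnt U p = p + 2}

/-- prefix key -/
noncomputable def pkey (U : Finset (Fin n)) : ℕ × Finset (Fin n) :=
  (pf U, U.filter (fun x => x.val ≤ pf U))

lemma pf_hit (U : Finset (Fin n)) (h : ∃ p, 2 * cnt U p = p + 2) : 2 * cnt U (pf U) = pf U + 2 := by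
  have : pf U ∈ {p | 2 * cnt U p = p + 2} := Nat.sInf_mem h
  exact this

lemma pf_le (U : Finset (Fin n)) (p : ℕ) (h : 2 * cnt U p = p + 2) : pf U ≤ p :=
  Nat.sInf_le h

lemma cnt_congr (U G : Finset (Fin n)) (p q : ℕ) (hq : q ≤ p)
    (h : U.filter (fun x => x.val ≤ p) = G.filter (fun x => x.val ≤ p)) : cnt U q = cnt G q := by
  unfold cnt
  congr 1
  ext x
  have := congrArg (fun s => x ∈ s) h
  simp only [mem_filter, eq_iff_iff] at this ⊢
  constructor
  · rintro ⟨h1, h2⟩; exact ⟨(this.mp ⟨h1, by omega⟩).1, h2⟩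
  · rintro ⟨h1, h2⟩; exact ⟨(this.mpr ⟨h1, by omega⟩).1, h2⟩

lemma pkey_congr (U G : Finset (Fin n)) (hG : ∃ p, 2 * cnt G p = p + 2)
    (h : U.filter (fun x => x.val ≤ pf G) = G.filter (fun x => x.val ≤ pf G)) :
    pkey U = pkey G := by
  have h1 : 2 * cnt U (pf G) = pf G + 2 := by
    rw [cnt_congr U G _ _ le_rfl h]; exact pf_hit G hG
  have h2 := pf_le U _ h1
  have h3 := pf_hit U ⟨_, h1⟩
  rw [cnt_congr U G _ _ h2 h] at h3
  have h4 := pf_le G _ h3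
  have h5 : pf U = pf G := le_antisymm h2 h4
  unfold pkey
  rw [h5, h]

lemma stable_ratio (F : Finset (Finset (Fin n))) (k : ℕ) (hk : 4 ≤ k) (hn : 2 * k + 1 ≤ n)
    (hF : Stable F)
    (hcard : ∀ A ∈ F, A.card = k) (hint : ∀ A ∈ F, ∀ B ∈ F, (A ∩ B).Nonempty)
    (o : Fin n) (ho : o.val = 0) :
    (n-1-k) * (av F o).card ≤ (k-1) * (DD (univ \ {o}) (av F o) (k-1)).card := by
  classical
  set 𝒢 := av F o with h𝒢
  set D := DD (univ \ {o}) 𝒢 (k-1) with hD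
  have h𝒢F : ∀ G ∈ 𝒢, G ∈ F ∧ o ∉ G := by
    intro G hG; rw [h𝒢, av, mem_filter] at hG; exact hG
  have hhit : ∀ G ∈ 𝒢, ∃ p, 2 * cnt G p = p + 2 := by
    intro G hG
    obtain ⟨h1, h2⟩ := h𝒢F G hG
    apply hits F k (by omega) hF hcard hint G h1
    intro x hx hx0
    apply h2
    have : x = o := Fin.ext (by omega)
    exact this ▸ hx
  have e1 : 𝒢.card = ∑ κ ∈ 𝒢.image pkey, (𝒢.filter (fun G => pkey G = κ)).card :=
    card_eq_sum_card_image pkey 𝒢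
  have e2 : ∑ κ ∈ 𝒢.image pkey, (D.filter (fun H => pkey ((univ \ {o}) \ H) = κ)).card ≤ D.card := by
    rw [← card_biUnion]
    · apply card_le_card
      intro H hH
      rw [mem_biUnion] at hH
      obtain ⟨κ, _, hH⟩ := hH
      exact (mem_filter.mp hH).1
    · intro κ _ κ' _ hne
      rw [Function.onFun, disjoint_left]
      intro H h1 h2
      exact hne ((mem_filter.mp h1).2.symm.trans (mem_filter.mp h2).2)
  rw [e1, mul_sum]
  refine le_trans ?_ (Nat.mul_le_mul_left _ e2)
  rw [mul_sum]
  apply sum_le_sum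
  intro κ hκ
  rw [mem_image] at hκ
  obtain ⟨G0, hG0, rfl⟩ := hκ
  set p := pf G0 with hp
  set S := G0.filter (fun x => x.val ≤ p) with hS
  have hGk : G0.card = k := hcard G0 (h𝒢F G0 hG0).1
  have hpS : 2 * S.card = p + 2 := pf_hit G0 (hhit G0 hG0)
  have hSk : S.card ≤ k := by rw [← hGk]; exact card_filter_le _ _
  set a := S.card with ha
  have hfib : ∀ G ∈ 𝒢, pkey G = pkey G0 → G.filter (fun x => x.val ≤ p) = S := by
    intro G _ h
    have h1 : pf G = p := congrArg Prod.fst h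
    have h2 : G.filter (fun x => x.val ≤ pf G) = S := congrArg Prod.snd h
    rwa [h1] at h2
  set Fib := 𝒢.filter (fun G => pkey G = pkey G0) with hFib
  set X := univ.filter (fun x : Fin n => p < x.val) with hX
  have hXc : X.card = n - 1 - p := by
    have h1 := (below_initSeg n 0 (p+1) (by omega)).2
    have h2 := card_filter_add_card_filter_not (s := (univ : Finset (Fin n))) (fun x => x.val < p + 1)
    have h3 : (univ.filter (fun x : Fin n => ¬ x.val < p + 1)) = X := by
      rw [hX]; apply filter_congr; intro x _; constructor <;> intro h <;> omega
    rw [h1, h3, card_univ, Fintype.card_fin] at h2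
    omega
  have hGdec : ∀ G ∈ Fib, ∀ x, x ∈ G ↔ (x ∈ S ∨ (x ∈ X ∧ x ∈ G)) := by
    intro G hG x
    rw [hFib, mem_filter] at hG
    have := hfib G hG.1 hG.2
    rw [← this, hX]
    simp only [mem_filter, mem_univ, true_and]
    constructor
    · intro h
      by_cases h' : x.val ≤ p
      · left; exact ⟨h, h'⟩
      · right; exact ⟨by omega, h⟩
    · rintro (h | h)
      · exact h.1
      · exact h.2
  set Yf := Fib.image (fun G => X \ G) with hYf
  have hYc : Yf.card = Fib.card := by
    rw [hYf, card_image_of_injOn]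
    intro G hG G' hG' h
    simp only at h
    ext x
    rw [hGdec G hG, hGdec G' hG']
    have : x ∈ X \ G ↔ x ∈ X \ G' := by rw [h]
    simp only [mem_sdiff] at this
    tauto
  have hFc : ∀ G ∈ Fib, (X \ G).card = n - 1 - p - (k - a) := by
    intro G hG
    have hG' := hG
    rw [hFib, mem_filter] at hG'
    have h1 := hfib G hG'.1 hG'.2
    have h2 := card_filter_add_card_filter_not (s := G) (fun x => x.val ≤ p)
    rw [h1, hcard G (h𝒢F G hG'.1).1] at h2
    have h3 : G.filter (fun x => ¬ x.val ≤ p) = G ∩ X := by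
      ext x; simp only [mem_filter, mem_inter, hX, mem_univ, true_and, not_le]
    rw [h3] at h2
    have h4 := card_sdiff_add_card_inter X G
    rw [inter_comm, hXc] at h4
    omega
  set Z := (powersetCard (k - a + 1) X).filter (fun z => ∃ g ∈ Fib, Disjoint z g) with hZ
  have hlym := lym_down X Yf Z (n - 1 - p - (k - a)) (k - a + 1) (by omega) (by
    intro y hy
    rw [hYf, mem_image] at hy
    obtain ⟨G, hG, rfl⟩ := hy
    exact ⟨sdiff_subset, hFc G hG⟩) (by
    intro y hy z hzy hz
    rw [hYf, mem_image] at hy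
    obtain ⟨G, hG, rfl⟩ := hy
    rw [hZ, mem_filter, mem_powersetCard]
    exact ⟨⟨hzy.trans sdiff_subset, hz⟩, G, hG, disjoint_of_subset_left hzy sdiff_disjoint⟩)
  rw [hYc, hXc] at hlym
  rw [Nat.choose_symm_of_eq_add (show n - 1 - p = (n - 1 - p - (k - a)) + (k - a) by omega)] at hlym
  have hoS : o ∉ S := fun h => (h𝒢F G0 hG0).2 (mem_filter.mp h).1
  set Lw := (univ.filter (fun x : Fin n => x.val ≤ p)) \ (insert o S) with hLw
  have hIc : (univ.filter (fun x : Fin n => x.val ≤ p)).card = p + 1 := by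
    have h1 := (below_initSeg n 0 (p+1) (by omega)).2
    have h3 : (univ.filter (fun x : Fin n => x.val ≤ p)) = univ.filter (fun x : Fin n => x.val < p + 1) := by
      apply filter_congr; intro x _; constructor <;> intro h <;> omega
    rw [h3, h1]
  have hIsub : insert o S ⊆ univ.filter (fun x : Fin n => x.val ≤ p) := by
    intro x hx
    rw [mem_filter]
    refine ⟨mem_univ _, ?_⟩
    rw [mem_insert] at hx
    rcases hx with rfl | hx
    · omega
    · exact (mem_filter.mp hx).2
  have ha2 : 2 ≤ a := by
    have := card_le_card hIsub
    rw [hIc, card_insert_of_notMem hoS] at this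
    omega
  have hLc : Lw.card = a - 2 := by
    rw [hLw, card_sdiff_of_subset hIsub, card_insert_of_notMem hoS, hIc]
    omega
  have hZD : Z.card ≤ (D.filter (fun H => pkey ((univ \ {o}) \ H) = pkey G0)).card := by
    apply card_le_card_of_injOn (fun z => z ∪ Lw)
    · intro z hz
      rw [mem_coe, hZ, mem_filter, mem_powersetCard] at hz
      obtain ⟨⟨hzX, hzc⟩, g, hg, hzg⟩ := hz
      have hdis : Disjoint z Lw := by
        rw [disjoint_left]
        intro x hx hx'
        have h1 := (mem_filter.mp (hzX hx)).2
        rw [hLw, mem_sdiff, mem_filter] at hx'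
        omega
      rw [mem_coe, mem_filter]
      constructor
      · rw [hD, DD, mem_filter, mem_powersetCard]
        refine ⟨⟨?_, ?_⟩, g, (mem_filter.mp hg).1, ?_⟩
        · rw [subset_sdiff, disjoint_singleton_right]
          refine ⟨subset_univ _, ?_⟩
          rw [mem_union, not_or]
          constructor
          · intro h
            have h1 := (mem_filter.mp (hzX h)).2
            omega
          · rw [hLw]; simp
        · rw [card_union_of_disjoint hdis, hzc, hLc]; omega
        · rw [disjoint_union_left]
          refine ⟨hzg, ?_⟩
          rw [disjoint_left]
          intro x hx hx'
          rw [hGdec g hg] at hx'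
          rw [hLw, mem_sdiff, mem_filter, mem_insert, not_or] at hx
          rcases hx' with h | h
          · exact hx.2.2 h
          · have h1 := (mem_filter.mp h.1).2
            omega
      · apply pkey_congr _ _ (hhit G0 hG0)
        change _ = S
        ext x
        have hxX : x ∈ z → p < x.val := fun h => (mem_filter.mp (hzX h)).2
        have hxS : x ∈ S → x.val ≤ p := fun h => (mem_filter.mp h).2
        have hxo : x ∈ S → x ≠ o := fun h h' => hoS (h' ▸ h)
        simp only [mem_filter, mem_sdiff, mem_univ, true_and, mem_singleton, mem_union, hLw,
          mem_insert, not_or]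
        constructor
        · rintro ⟨⟨h1, h2⟩, h3⟩
          by_contra hxs
          exact h2.2 ⟨h3, h1, hxs⟩
        · intro h
          refine ⟨⟨hxo h, ?_, ?_⟩, hxS h⟩
          · intro h'
            have := hxX h'
            have := hxS h
            omega
          · rintro ⟨_, _, h3⟩; exact h3 h
    · intro z hz z' hz' h
      rw [mem_coe, hZ, mem_filter, mem_powersetCard] at hz hz'
      have hL : ∀ x ∈ Lw, x ∉ X := by
        intro x hx hx'
        have h1 := (mem_filter.mp hx').2
        rw [hLw, mem_sdiff, mem_filter] at hx
        omega
      ext x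
      have h1 : x ∈ z ∪ Lw ↔ x ∈ z' ∪ Lw := by simp only at h; rw [h]
      rw [mem_union, mem_union] at h1
      constructor
      · intro hx
        rcases h1.mp (Or.inl hx) with h2 | h2
        · exact h2
        · exact absurd (hz.1.1 hx) (hL x h2)
      · intro hx
        rcases h1.mpr (Or.inl hx) with h2 | h2
        · exact h2
        · exact absurd (hz'.1.1 hx) (hL x h2)
  refine le_trans ?_ (Nat.mul_le_mul_left _ hZD)
  -- arithmetic
  obtain ⟨c, hc⟩ : ∃ c, a = c + 2 := ⟨a - 2, by omega⟩
  have hch := Nat.choose_succ_right_eq (n - 1 - p) (k - a)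
  set C1 := (n - 1 - p).choose (k - a + 1)
  set C0 := (n - 1 - p).choose (k - a) with hC0
  have hC0pos : 0 < C0 := Nat.choose_pos (by omega)
  have h1 : Fib.card * (n - 1 - p - (k - a)) ≤ Z.card * (k - a + 1) := by
    apply Nat.le_of_mul_le_mul_right _ hC0pos
    calc Fib.card * (n - 1 - p - (k - a)) * C0 = Fib.card * (C0 * (n - 1 - p - (k - a))) := by ring
      _ = Fib.card * C1 * (k - a + 1) := by rw [← hch]; ring
      _ ≤ Z.card * C0 * (k - a + 1) := Nat.mul_le_mul_right _ hlym
      _ = _ := by ring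
  obtain ⟨s, hs⟩ : ∃ s, k - a + 1 = s + 1 := ⟨k - a, rfl⟩
  obtain ⟨d, hd⟩ : ∃ d, n - 1 - p - (k - a) = s + 1 + d := ⟨n - 1 - p - (k - a) - s - 1, by omega⟩
  rw [hd, hs] at h1
  have hl : k - 1 = s + 1 + c := by omega
  have hr : n - 1 - k = s + 1 + d + c := by omega
  rw [hl, hr]
  apply Nat.le_of_mul_le_mul_right _ (show 0 < s + 1 by omega)
  calc (s + 1 + d + c) * Fib.card * (s + 1) ≤ (s + 1 + c) * (Fib.card * (s + 1 + d)) := by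
        nlinarith [Nat.zero_le (Fib.card * c * d)]
    _ ≤ (s + 1 + c) * (Z.card * (s + 1)) := Nat.mul_le_mul_left _ h1
    _ = _ := by ring

end

end PartD

section PartS

open Finset
open scoped FinsetFamily

section
variable {n : ℕ}

/-- shifting map -/
def shm (F : Finset (Finset (Fin n))) (i j : Fin n) (A : Finset (Fin n)) : Finset (Fin n) :=
  if i ∈ A ∧ j ∉ A ∧ insert j (A.erase i) ∉ F then insert j (A.erase i) else A

lemma shm_inj (F : Finset (Finset (Fin n))) (i j : Fin n) : Set.InjOn (shm F i j) F := by
  intro A hA B hB h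
  rw [mem_coe] at hA hB
  unfold shm at h
  split_ifs at h with h1 h2 h2
  · have e1 : A = insert i ((insert j (A.erase i)).erase j) := by
      rw [erase_insert (fun h => h1.2.1 (mem_of_mem_erase h)), insert_erase h1.1]
    have e2 : B = insert i ((insert j (B.erase i)).erase j) := by
      rw [erase_insert (fun h => h2.2.1 (mem_of_mem_erase h)), insert_erase h2.1]
    rw [e1, e2, h]
  · exact absurd (h ▸ hB) h1.2.2
  · exact absurd (h ▸ hA) h2.2.2
  · exact h

lemma shm_card (F : Finset (Finset (Fin n))) (i j : Fin n) (A : Finset (Fin n)) :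
    (shm F i j A).card = A.card := by
  unfold shm
  split_ifs with h1
  · rw [card_insert_of_notMem (fun h => h1.2.1 (mem_of_mem_erase h)), card_erase_of_mem h1.1]
    have : 0 < A.card := card_pos.mpr ⟨i, h1.1⟩
    omega
  · rfl

lemma shm_int (F : Finset (Finset (Fin n))) (i j : Fin n)
    (hint : ∀ A ∈ F, ∀ B ∈ F, (A ∩ B).Nonempty) :
    ∀ A ∈ F, ∀ B ∈ F, (shm F i j A ∩ shm F i j B).Nonempty := by
  have key : ∀ A ∈ F, ∀ B ∈ F, ¬ (i ∈ A ∧ j ∉ A ∧ insert j (A.erase i) ∉ F) →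
      (i ∈ B ∧ j ∉ B ∧ insert j (B.erase i) ∉ F) → (A ∩ insert j (B.erase i)).Nonempty := by
    intro A hA B hB h1 h2
    obtain ⟨x, hx⟩ := hint A hA B hB
    rw [mem_inter] at hx
    by_cases hxi : x = i
    · subst hxi
      by_cases hjA : j ∈ A
      · exact ⟨j, by simp [hjA]⟩
      · have h3 : insert j (A.erase x) ∈ F := by
          by_contra h; exact h1 ⟨hx.1, hjA, h⟩
        obtain ⟨y, hy⟩ := hint _ h3 B hB
        simp only [mem_inter, mem_insert, mem_erase] at hy
        rcases hy with ⟨rfl | hy, hyB⟩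
        · exact absurd hyB h2.2.1
        · exact ⟨y, by simp [hy, hyB]⟩
    · exact ⟨x, by simp [hx, hxi]⟩
  intro A hA B hB
  unfold shm
  split_ifs with h1 h2 h2
  · exact ⟨j, by simp⟩
  · rw [inter_comm]; exact key B hB A hA h2 h1
  · exact key A hA B hB h1 h2
  · exact hint A hA B hB

/-- weight of a set -/
def wt (A : Finset (Fin n)) : ℕ := ∑ x ∈ A, x.val

lemma shm_wt_lt (i j : Fin n) (hji : j < i) (A : Finset (Fin n)) (h1 : i ∈ A) (h2 : j ∉ A) :
    wt (insert j (A.erase i)) < wt A := by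
  unfold wt
  rw [sum_insert (fun h => h2 (mem_of_mem_erase h)), ← add_sum_erase A _ h1]
  have : j.val < i.val := hji
  omega

lemma good_main (k : ℕ) (hk : 4 ≤ k) (hn : 2 * k + 1 ≤ n) : ∀ m : ℕ,
    ∀ F : Finset (Finset (Fin n)), ∑ A ∈ F, wt A = m →
    (∀ A ∈ F, A.card = k) → (∀ A ∈ F, ∀ B ∈ F, (A ∩ B).Nonempty) →
    (∀ i, 3 * (n-3).choose (k-2) < 2 * (av F i).card) → Good k F := by
  classical
  obtain ⟨hY, hYW, hP, hhalf⟩ := WY k hk hn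
  intro m
  induction m using Nat.strong_induction_on with
  | _ m ih =>
  intro F hm hcard hint hav
  by_cases hst : Stable F
  · let o : Fin n := ⟨0, by omega⟩
    have h1 := stable_ratio F k hk hn hst hcard hint o rfl
    have ht := F_total F k hcard hint o
    have hs := F_split F o
    have ha := hav o
    set e := (DD (univ \ {o}) (av F o) (k-1)).card
    set g := (av F o).card
    have hch : (n-3).choose (k-1) * (k-1) = (n-3).choose (k-2) * (n-1-k) := by
      have := Nat.choose_succ_right_eq (n-3) (k-2)
      rw [show k - 2 + 1 = k - 1 by omega, show n - 3 - (k-2) = n - 1 - k by omega] at this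
      exact this
    have h2 : (n-3).choose (k-1) * g ≤ (n-3).choose (k-2) * e := by
      apply Nat.le_of_mul_le_mul_right _ (show 0 < k - 1 by omega)
      calc (n-3).choose (k-1) * g * (k-1) = ((n-3).choose (k-1) * (k-1)) * g := by ring
        _ = (n-3).choose (k-2) * ((n-1-k) * g) := by rw [hch]; ring
        _ ≤ (n-3).choose (k-2) * ((k-1) * e) := Nat.mul_le_mul_left _ h1
        _ = _ := by ring
    have h3 : F.card + e ≤ (n-1).choose (k-1) + g := by omega
    have h4 : (F.card : ℝ) + e ≤ (n-1).choose (k-1) + g := by exact_mod_cast h3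
    have h5 : ((n-3).choose (k-1) : ℝ) * g ≤ (n-3).choose (k-2) * e := by exact_mod_cast h2
    have h6 : 3 * ((n-3).choose (k-2) : ℝ) < 2 * g := by exact_mod_cast ha
    unfold Good
    have hY' : (0:ℝ) < (n-3).choose (k-2) := by exact_mod_cast hY
    have hYW' : ((n-3).choose (k-2) : ℝ) ≤ (n-3).choose (k-1) := by exact_mod_cast hYW
    set W : ℝ := ((n-3).choose (k-1) : ℝ)
    set Y : ℝ := ((n-3).choose (k-2) : ℝ)
    -- Y (e - g) ≥ (W - Y) g ≥ 3/2 (W-Y) Y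
    have h7 : Y * (W - Y) ≤ Y * (e - g) := by nlinarith
    have h8 : W - Y ≤ e - g := le_of_mul_le_mul_left h7 hY'
    nlinarith [mul_nonneg (sub_nonneg.mpr hYW') hY'.le]
  · unfold Stable at hst
    push Not at hst
    obtain ⟨i, j, hji, A0, hA0, hiA0, hjA0, hnot⟩ := hst
    set F' := F.image (shm F i j) with hF'
    have hinj := shm_inj F i j
    have hc' : F'.card = F.card := card_image_of_injOn hinj
    have hcard' : ∀ A ∈ F', A.card = k := by
      intro A hA
      rw [hF', mem_image] at hA
      obtain ⟨B, hB, rfl⟩ := hA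
      rw [shm_card, hcard B hB]
    have hint' : ∀ A ∈ F', ∀ B ∈ F', (A ∩ B).Nonempty := by
      intro A hA B hB
      rw [hF', mem_image] at hA hB
      obtain ⟨A, hA, rfl⟩ := hA
      obtain ⟨B, hB, rfl⟩ := hB
      exact shm_int F i j hint A hA B hB
    have hgood : Good k F' → Good k F := by
      unfold Good; rw [hc']; exact id
    apply hgood
    have hwt : ∑ A ∈ F', wt A < m := by
      rw [hF', sum_image hinj, ← hm]
      apply sum_lt_sum
      · intro A hA
        unfold shm
        split_ifs with h
        · exact (shm_wt_lt i j hji A h.1 h.2.1).le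
        · exact le_rfl
      · refine ⟨A0, hA0, ?_⟩
        unfold shm
        rw [if_pos ⟨hiA0, hjA0, hnot⟩]
        exact shm_wt_lt i j hji A0 hiA0 hjA0
    have hav' : ∀ a, (av F' a).card = (F.filter (fun A => a ∉ shm F i j A)).card := by
      intro a
      rw [av, hF', filter_image, card_image_of_injOn]
      exact hinj.mono (filter_subset _ _)
    by_cases hall : ∀ a, 3 * (n-3).choose (k-2) < 2 * (av F' a).card
    · exact ih _ hwt F' rfl hcard' hint' hall
    · push Not at hall
      obtain ⟨a, ha⟩ := hall
      have haj : a = j := by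
        by_contra haj
        have : (av F a).card ≤ (av F' a).card := by
          rw [hav', av]
          apply card_le_card
          intro A hA
          rw [mem_filter] at hA ⊢
          refine ⟨hA.1, ?_⟩
          unfold shm
          split_ifs with h
          · rw [mem_insert, not_or]
            exact ⟨haj, fun h => hA.2 (mem_of_mem_erase h)⟩
          · exact hA.2
        have := hav a
        omega
      subst haj
      have hij : i ≠ a := hji.ne'
      set Zf := F.filter (fun A => i ∉ A ∧ a ∉ A) with hZf
      have hZ : Zf.card ≤ (av F' a).card := by
        rw [hav']
        apply card_le_card
        intro A hA
        rw [hZf, mem_filter] at hA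
        rw [mem_filter]
        refine ⟨hA.1, ?_⟩
        unfold shm
        rw [if_neg (fun h => hA.2.1 h.1)]
        exact hA.2.2
      have s1 : (av F i).card = (F.filter (fun A => i ∉ A ∧ a ∈ A)).card + Zf.card := by
        rw [av, ← card_filter_add_card_filter_not (s := F.filter (fun A => i ∉ A)) (fun A => a ∈ A),
          filter_filter, filter_filter]
      have s2 : (av F a).card = (F.filter (fun A => i ∈ A ∧ a ∉ A)).card + Zf.card := by
        rw [av, ← card_filter_add_card_filter_not (s := F.filter (fun A => a ∉ A)) (fun A => i ∈ A),
          filter_filter, filter_filter, hZf]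
        simp only [and_comm]
      have b1 := hav i
      have b2 := hav a
      have hZlow : (n-3).choose (k-2) ≤ 2 * Zf.card := by
        by_cases hB : (n-3).choose (k-2) ≤ (F.filter (fun A => i ∈ A ∧ a ∉ A)).card
        · have := cross F k hk hn hcard hint i a hij hB
          omega
        · omega
      exact good_of_mid F' k hk hn hcard' hint' a (by omega) ha

end

end PartS

section PartN

lemma pow43 (e : ℕ) (he : 7 ≤ e) : (3 * (e:ℝ) + 9) / 28 + 51 / 14 ≤ (4/3 : ℝ) ^ e := by
  induction e, he using Nat.le_induction with
  | base => norm_num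
  | succ e he ih =>
    rw [pow_succ]
    push_cast
    have : (7:ℝ) ≤ e := by exact_mod_cast he
    linarith

lemma poly9 (z : ℝ) (hz0 : 0 ≤ z) (h : z ≤ 1 / 3) : 3 ≤ (1 + z) ^ 7 * (3 - 8 * z + z ^ 2) := by
  have s2 : z ^ 2 ≤ z / 3 := by nlinarith
  have step : ∀ m : ℕ, z ^ (m + 1) ≤ z ^ m / 3 := by
    intro m
    rw [pow_succ]
    have : 0 ≤ z ^ m := by positivity
    nlinarith
  have e3 := step 2
  have e4 := step 3
  have e5 := step 4
  have e6 := step 5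
  have e7 := step 6
  have e8 := step 7
  norm_num at e3 e4 e5 e6 e7 e8
  have e9 : 0 ≤ z ^ 9 := by positivity
  have : (1 + z) ^ 7 * (3 - 8 * z + z ^ 2) = 3 + 13 * z + 8 * z ^ 2 - 56 * z ^ 3 - 154 * z ^ 4
    - 182 * z ^ 5 - 112 * z ^ 6 - 32 * z ^ 7 - z ^ 8 + z ^ 9 := by ring
  rw [this]
  linarith

section
variable (n k t z x : ℝ) (e : ℕ)

/-- 1+z small: seventh power -/
lemma x_small (hz0 : 0 ≤ z) (he : 7 ≤ e) (hx : x = (1 / (1 + z)) ^ e) : x * (1 + z) ^ 7 ≤ 1 := by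
  have h1 : 0 < 1 + z := by linarith
  have h2 : (1 / (1 + z)) ^ e ≤ (1 / (1 + z)) ^ 7 := by
    apply pow_le_pow_of_le_one
    · positivity
    · rw [div_le_one h1]; linarith
    · exact he
  rw [hx]
  calc (1 / (1 + z)) ^ e * (1 + z) ^ 7 ≤ (1 / (1 + z)) ^ 7 * (1 + z) ^ 7 := by gcongr
    _ = 1 := by rw [← mul_pow]; field_simp

lemma x_large (ht : 2 ≤ t) (hk : 4 * t + 8 ≤ k) (hn : 2 * k + 14 * t ≤ n)
    (hz : z = (k - 1) / (n - k - 1)) (hz3 : 1 / 3 ≤ z) (he : (e : ℝ) = k - 3 * t - 3)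
    (he7 : 7 ≤ e) (hx : x = (1 / (1 + z)) ^ e) : 3 * x ≤ 1 - z := by
  have h1 : x ≤ (3/4) ^ e := by
    rw [hx]
    apply pow_le_pow_left₀ (by positivity)
    rw [div_le_div_iff₀ (by linarith) (by norm_num)]
    linarith
  have h2 : 14 * t / (k + 14 * t) ≤ 1 - z := by
    have : 1 - z = (n - 2 * k) / (n - k - 1) := by
      rw [hz]; field_simp [show n - k - 1 ≠ 0 by linarith]; ring
    rw [this, div_le_div_iff₀ (by linarith) (by linarith)]
    nlinarith
  refine le_trans ?_ h2
  rw [le_div_iff₀ (by linarith)]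
  have h3 := pow43 e he7
  have h4 : (3/4 : ℝ) ^ e * (4/3) ^ e = 1 := by rw [← mul_pow]; norm_num
  have h5 : (0:ℝ) < (3/4) ^ e := by positivity
  have h6 : 3 * (k + 14 * t) ≤ 14 * t * (4/3) ^ e := by
    have : 3 * (k + 14 * t) ≤ 14 * t * ((3 * (e:ℝ) + 9) / 28 + 51 / 14) := by
      have : (0:ℝ) ≤ e := by positivity
      nlinarith
    refine this.trans ?_
    gcongr
  calc 3 * x * (k + 14 * t) = x * (3 * (k + 14 * t)) := by ring
    _ ≤ (3/4)^e * (14 * t * (4/3)^e) := by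
        apply mul_le_mul h1 h6 (by linarith) h5.le
    _ = 14 * t := by linear_combination 14 * t * h4

lemma N1 (ht : 2 ≤ t) (hk : 4 * t + 8 ≤ k) (hn : 2 * k + 14 * t ≤ n)
    (hz : z = (k - 1) / (n - k - 1)) (he : (e : ℝ) = k - 3 * t - 3)
    (he7 : 7 ≤ e) (hx : x = (1 / (1 + z)) ^ e) :
    x ≤ 1 - 3 / 2 * (k / (k - t)) * z + z ^ 2 / 2 := by
  have hz0 : 0 ≤ z := by rw [hz]; apply div_nonneg <;> linarith
  have hz1 : z ≤ 1 := by rw [hz, div_le_one (by linarith)]; linarith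
  rcases le_total z (1/3) with h | h
  · have hκ : k / (k - t) ≤ 4 / 3 := by
      rw [div_le_div_iff₀ (by linarith) (by norm_num)]; linarith
    have h1 := x_small z x e hz0 he7 hx
    have h2 : 1 ≤ (1 + z) ^ 7 * (1 - 2 * z + z ^ 2 / 2) := by
      have q : 1 + 7 * z + 21 * z ^ 2 + 35 * z ^ 3 ≤ (1 + z) ^ 7 := by
        have : (1 + z) ^ 7 = 1 + 7 * z + 21 * z ^ 2 + 35 * z ^ 3 + (35 * z ^ 4 + 21 * z ^ 5 + 7 * z ^ 6 + z ^ 7) := by ring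
        rw [this]
        have : 0 ≤ 35 * z ^ 4 + 21 * z ^ 5 + 7 * z ^ 6 + z ^ 7 := by positivity
        linarith
      have q2 : 0 ≤ 1 - 2 * z + z ^ 2 / 2 := by nlinarith
      refine le_trans ?_ (mul_le_mul_of_nonneg_right q q2)
      have e2 : z ^ 2 ≤ z / 3 := by nlinarith
      have e3 : z ^ 3 ≤ z / 9 := by nlinarith
      have e4 : z ^ 4 ≤ z / 27 := by nlinarith
      have e5 : 0 ≤ z ^ 5 := by positivity
      have e6 : 0 ≤ z ^ 2 := by positivity
      nlinarith
    have hp : (0:ℝ) < (1 + z) ^ 7 := by positivity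
    have h3 : x ≤ 1 - 2 * z + z ^ 2 / 2 := by
      apply le_of_mul_le_mul_right _ hp
      linarith
    nlinarith
  · have h1 := x_large n k t z x e ht hk hn hz h he he7 hx
    have h2 : k / (k - t) * z ≤ z + 2 / 21 * (1 - z) := by
      have a1 : k / (k - t) = 1 + t / (k - t) := by
        field_simp [show k - t ≠ 0 by linarith]; ring
      have a2 : 1 - z = (n - 2 * k) / (n - k - 1) := by
        rw [hz]; field_simp [show n - k - 1 ≠ 0 by linarith]; ring
      have a3 : t / (k - t) * z ≤ 2 / 21 * (1 - z) := by
        rw [a2, hz, div_mul_div_comm, ← mul_div_assoc,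
          div_le_div_iff₀ (mul_pos (by linarith) (by linarith)) (by linarith)]
        have : t * (k - 1) ≤ 2 / 21 * (n - 2 * k) * (k - t) := by
          have : (4/3) * t * (k - t) ≤ 2 / 21 * (n - 2 * k) * (k - t) := by
            apply mul_le_mul_of_nonneg_right <;> linarith
          nlinarith
        have := mul_le_mul_of_nonneg_right this (show 0 ≤ n - k - 1 by linarith)
        linarith
      rw [a1]; linarith
    nlinarith

lemma N2 (ht : 2 ≤ t) (hk : 4 * t + 8 ≤ k) (hn : 2 * k + 14 * t ≤ n)
    (hz : z = (k - 1) / (n - k - 1)) (he : (e : ℝ) = k - 3 * t - 3)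
    (he7 : 7 ≤ e) (hx : x = (1 / (1 + z)) ^ e) (d A : ℝ)
    (hd : d = t * (n - k) / ((n - t) * k)) (hA : A = (n - 1) * (n - 2) / ((n - k) * (n - k - 1))) :
    (1 - d) * x + d * A ≤ (1 - z) * (1 - z / 2) := by
  have hz0 : 0 ≤ z := by rw [hz]; apply div_nonneg <;> linarith
  have hz1 : z ≤ 1 := by rw [hz, div_le_one (by linarith)]; linarith
  have hx0 : 0 ≤ x := by rw [hx]; positivity
  have hnt : 0 < n - t := by linarith
  have hnk : 0 < n - k := by linarith
  have hnk1 : 0 < n - k - 1 := by linarith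
  have hk0 : 0 < k := by linarith
  have hd0 : 0 ≤ d := by
    rw [hd]; apply div_nonneg <;> apply mul_nonneg <;> linarith
  rcases le_total z (1/3) with h | h
  · have h1 := x_small z x e hz0 he7 hx
    have hp : (0:ℝ) < (1 + z) ^ 7 := by positivity
    have hp1 : (1:ℝ) ≤ (1 + z) ^ 7 := one_le_pow₀ (by linarith)
    have hx1 : x ≤ 1 := by nlinarith
    have hd4 : d ≤ 1 / 4 := by
      rw [hd, div_le_div_iff₀ (by positivity) (by norm_num)]
      nlinarith
    have hA2 : A ≤ (1 + z) ^ 2 := by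
      have : 1 + z = (n - 2) / (n - k - 1) := by
        rw [hz]; field_simp; ring
      rw [this, hA, div_pow, div_le_div_iff₀ (by positivity) (by positivity)]
      have : (n - 1) * (n - k - 1) ≤ (n - 2) * (n - k) := by nlinarith
      have h5 := mul_le_mul_of_nonneg_left this (show 0 ≤ (n - 2) * (n - k - 1) by
        apply mul_nonneg <;> linarith)
      nlinarith
    have hA1 : (1 - d) * x + d * A ≤ 3 / 4 * x + 1 / 4 * (1 + z) ^ 2 := by
      have h6 : d * A ≤ d * (1 + z) ^ 2 := mul_le_mul_of_nonneg_left hA2 hd0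
      have h7 : x ≤ (1 + z) ^ 2 := hx1.trans (one_le_pow₀ (by linarith))
      have h8 : 0 ≤ (1 / 4 - d) * ((1 + z) ^ 2 - x) := mul_nonneg (by linarith) (by linarith)
      linarith
    refine hA1.trans ?_
    apply le_of_mul_le_mul_right _ hp
    have h9 := poly9 z hz0 h
    have : (1 - z) * (1 - z / 2) * (1 + z) ^ 7 - 1 / 4 * (1 + z) ^ 2 * (1 + z) ^ 7
        = 1 / 4 * ((1 + z) ^ 7 * (3 - 8 * z + z ^ 2)) := by ring
    linarith
  · have h1 := x_large n k t z x e ht hk hn hz h he he7 hx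
    have h2 : d * A ≤ (1 - z) * (2 / 3 - z / 2) := by
      have f0 : d * A = (t * (n - 2) / (k * (n - t))) * ((n - 1) / (n - k - 1)) := by
        rw [hd, hA]; field_simp
      have f1 : (n - 1) / (n - k - 1) ≤ 1 + 16 / 15 * z := by
        rw [hz, div_le_iff₀ hnk1]
        have : (1 + 16 / 15 * ((k - 1) / (n - k - 1))) * (n - k - 1) = n - k - 1 + 16/15 * (k - 1) := by
          field_simp
        rw [this]; linarith
      have f2 : t * (n - 2) / (k * (n - t)) ≤ 11 / 147 * ((n - 2 * k) / (k - 1)) := by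
        rw [← mul_div_assoc, div_le_div_iff₀ (by positivity) (by linarith)]
        have g1 : t * (n - 2) ≤ (11 / 147 * (n - 2 * k)) * (n - t) := by
          have g2 : t * (22 / 21) ≤ 11 / 147 * (n - 2 * k) := by linarith
          have g3 : n - 2 ≤ 22 / 21 * (n - t) := by linarith
          calc t * (n - 2) ≤ t * (22 / 21 * (n - t)) := by gcongr
            _ = (t * (22/21)) * (n - t) := by ring
            _ ≤ _ := by gcongr
        have g4 : 0 ≤ t * (n - 2) := mul_nonneg (by linarith) (by linarith)
        calc t * (n - 2) * (k - 1) ≤ t * (n - 2) * k := by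
              apply mul_le_mul_of_nonneg_left _ g4; linarith
          _ ≤ (11 / 147 * (n - 2 * k)) * (n - t) * k := by gcongr
          _ = _ := by ring
      have f3 : (n - 2 * k) / (k - 1) * z = 1 - z := by
        rw [hz]; field_simp [show k - 1 ≠ 0 by linarith]; ring
      have hzp : 0 < z := by linarith
      apply le_of_mul_le_mul_right _ hzp
      rw [f0]
      have f4 : 0 ≤ (n - 2 * k) / (k - 1) := div_nonneg (by linarith) (by linarith)
      have f5 : 0 ≤ (n - 1) / (n - k - 1) := div_nonneg (by linarith) (by linarith)
      calc t * (n - 2) / (k * (n - t)) * ((n - 1) / (n - k - 1)) * z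
          ≤ (11 / 147 * ((n - 2 * k) / (k - 1))) * (1 + 16 / 15 * z) * z := by
            gcongr
        _ = 11 / 147 * ((n - 2 * k) / (k - 1) * z) * (1 + 16 / 15 * z) := by ring
        _ = 11 / 147 * (1 - z) * (1 + 16/15 * z) := by rw [f3]
        _ = (1 - z) * (11/147 * (1 + 16/15 * z)) := by ring
        _ ≤ (1 - z) * ((2/3 - z/2) * z) := by
            apply mul_le_mul_of_nonneg_left _ (by linarith)
            nlinarith [mul_nonneg (sub_nonneg.mpr h) (sub_nonneg.mpr hz1)]
        _ = _ := by ring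
    have h3 : 0 ≤ d * x := mul_nonneg hd0 hx0
    nlinarith

end

end PartN

section PartR

lemma choose_ratio_pow (a b : ℕ) (x y : ℝ) (hy : 0 ≤ y) (hx : 0 ≤ x) : ∀ s : ℕ, s ≤ a → s ≤ b →
    (∀ i : ℕ, i < s → ((b:ℝ) - i) * y ≤ x * ((a:ℝ) - i)) →
    (b.choose s : ℝ) * y ^ s ≤ (a.choose s : ℝ) * x ^ s := by
  intro s
  induction s with
  | zero => intro _ _ _; simp
  | succ s ih =>
    intro h1 h2 h
    have h3 := ih (by omega) (by omega) (fun i hi => h i (by omega))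
    have h4 := h s (by omega)
    have e1 : (b.choose (s+1) : ℝ) * (s + 1) = b.choose s * ((b:ℝ) - s) := by
      have := Nat.choose_succ_right_eq b s
      have := congrArg (Nat.cast : ℕ → ℝ) this
      push_cast [Nat.cast_sub (show s ≤ b by omega)] at this
      exact this
    have e2 : (a.choose (s+1) : ℝ) * (s + 1) = a.choose s * ((a:ℝ) - s) := by
      have := Nat.choose_succ_right_eq a s
      have := congrArg (Nat.cast : ℕ → ℝ) this
      push_cast [Nat.cast_sub (show s ≤ a by omega)] at this
      exact this
    have hs : (0:ℝ) < s + 1 := by positivity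
    have hbs : (0:ℝ) ≤ (b:ℝ) - s := by
      have : (s:ℝ) ≤ b := by exact_mod_cast (show s ≤ b by omega)
      linarith
    apply le_of_mul_le_mul_right _ hs
    calc (b.choose (s+1) : ℝ) * y ^ (s+1) * (s+1) = (b.choose (s+1) * (s+1)) * y ^ (s+1) := by ring
      _ = (b.choose s * y ^ s) * (((b:ℝ) - s) * y) := by rw [e1]; ring
      _ ≤ (a.choose s * x ^ s) * (x * ((a:ℝ) - s)) :=
          mul_le_mul h3 h4 (mul_nonneg hbs hy) (by positivity)
      _ = (a.choose (s+1) * (s+1)) * x ^ (s+1) := by rw [e2]; ring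
      _ = _ := by ring

lemma choose_drop (m s : ℕ) (q : ℝ) (hq : 0 ≤ q) : ∀ j : ℕ, s + j ≤ m →
    (∀ i : ℕ, i < j → (m:ℝ) - i - s ≤ q * ((m:ℝ) - i)) →
    ((m - j).choose s : ℝ) ≤ m.choose s * q ^ j := by
  intro j
  induction j with
  | zero => intro _ _; simp
  | succ j ih =>
    intro h1 h
    have h3 := ih (by omega) (fun i hi => h i (by omega))
    have h4 := h j (by omega)
    obtain ⟨u, hu⟩ : ∃ u, m - j = u + 1 := ⟨m - j - 1, by omega⟩
    have hu' : m - (j + 1) = u := by omega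
    have hmu : (m:ℝ) - j = u + 1 := by
      have : m = u + 1 + j := by omega
      rw [this]; push_cast; ring
    rw [hu] at h3
    rw [hu', pow_succ]
    rw [hmu] at h4
    have e1 : (u.choose s : ℝ) * (u + 1) = (u+1).choose s * ((u:ℝ) + 1 - s) := by
      have := Nat.choose_mul_succ_eq u s
      have := congrArg (Nat.cast : ℕ → ℝ) this
      push_cast [Nat.cast_sub (show s ≤ u + 1 by omega)] at this
      exact this
    have hup : (0:ℝ) < (u:ℝ) + 1 := by positivity
    apply le_of_mul_le_mul_right _ hup
    rw [e1]
    calc ((u+1).choose s : ℝ) * ((u:ℝ) + 1 - s) ≤ ((u+1).choose s : ℝ) * (q * (u + 1)) := by gcongr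
      _ ≤ (m.choose s * q ^ j) * (q * (u + 1)) := by gcongr
      _ = _ := by ring

lemma R_bound (n k t : ℕ) (ht : 2 ≤ t) (htk : 4 * t + 8 ≤ k) (hn : 2 * k + 14 * t ≤ n) (z x : ℝ)
    (hz : z = ((k:ℝ) - 1) / ((n:ℝ) - k - 1)) (hx : x = (1 / (1 + z)) ^ (k - 3 * t - 3)) :
    ((n-1).choose t : ℝ) * ((n-t-k-1).choose (k-t-1) : ℝ) ≤
      ((k-1).choose t : ℝ) * (((n-2*t-3).choose (k-1) : ℝ) * x) := by
  have htr : (2:ℝ) ≤ t := by exact_mod_cast ht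
  have hkr : 4 * (t:ℝ) + 8 ≤ k := by exact_mod_cast htk
  have hnr : 2 * (k:ℝ) + 14 * t ≤ n := by exact_mod_cast hn
  -- identity
  have id1 : ((n-k-1).choose (k-1) : ℝ) * ((k-1).choose t) =
      (n-k-1).choose t * ((n-t-k-1).choose (k-t-1)) := by
    have := Nat.choose_mul (n := n-k-1) (k := k-1) (s := t) (by omega)
    rw [show n - k - 1 - t = n - t - k - 1 by omega, show k - 1 - t = k - t - 1 by omega] at this
    exact_mod_cast this
  set M : ℝ := (n:ℝ) - t - k with hM
  have hM0 : 0 < M := by rw [hM]; linarith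
  have hMk : 0 < M + k := by linarith
  have P1 : ((n-1).choose t : ℝ) * M ^ t ≤ ((n-k-1).choose t : ℝ) * (M + k) ^ t := by
    apply choose_ratio_pow _ _ _ _ hM0.le hMk.le t (by omega) (by omega)
    intro i hi
    have hir : (i:ℝ) + 1 ≤ t := by exact_mod_cast hi
    rw [Nat.cast_sub (show 1 ≤ n - k by omega), Nat.cast_sub (show k ≤ n by omega),
      Nat.cast_sub (show 1 ≤ n by omega)]
    push_cast
    rw [hM]
    nlinarith [mul_nonneg (show (0:ℝ) ≤ (t:ℝ) - 1 - i by linarith) (show (0:ℝ) ≤ k by positivity)]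
  set q : ℝ := (M + 1) / (M + k) with hq
  have hq0 : 0 < q := by positivity
  have P2 : ((n-k-1).choose (k-1) : ℝ) ≤ ((n-2*t-3).choose (k-1) : ℝ) * q ^ (k-2*t-2) := by
    have := choose_drop (n-2*t-3) (k-1) q hq0.le (k-2*t-2) (by omega) (by
      intro i hi
      have hi0 : (0:ℝ) ≤ i := by positivity
      rw [Nat.cast_sub (show 1 ≤ k by omega)]
      have : ((n - 2 * t - 3 : ℕ) : ℝ) = (n:ℝ) - 2 * t - 3 := by
        rw [Nat.cast_sub (by omega), Nat.cast_sub (by omega)]; push_cast; ring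
      rw [this, hq, div_mul_eq_mul_div, le_div_iff₀ hMk, hM]
      push_cast
      nlinarith [mul_nonneg (show (0:ℝ) ≤ (t:ℝ) + 3 + i by linarith) (show (0:ℝ) ≤ (k:ℝ) - 1 by linarith)])
    rw [show n - 2 * t - 3 - (k - 2 * t - 2) = n - k - 1 by omega] at this
    exact this
  -- (M+1)^t/M^t ≤ 1/q
  have P3 : (M + k) ^ t * q ^ (t + 1) ≤ M ^ t := by
    have b := one_add_mul_le_pow (a := -(1 / (M+1))) (by
      have : 1 / (M + 1) ≤ 1 := by rw [div_le_one (by linarith)]; linarith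
      linarith) t
    have e1 : 1 + -(1 / (M + 1)) = M / (M + 1) := by field_simp; ring
    rw [e1] at b
    have b2 : q ≤ (M / (M+1)) ^ t := by
      refine le_trans ?_ b
      have e2 : 1 + (t:ℝ) * -(1 / (M+1)) = (M + 1 - t) / (M + 1) := by field_simp; ring
      rw [e2, hq, div_le_div_iff₀ hMk (by linarith)]
      have : (3 * (t:ℝ) + 7) * k ≤ ((k:ℝ) - t - 1) * M := by
        apply mul_le_mul
        · linarith
        · rw [hM]; linarith
        · positivity
        · linarith
      nlinarith [mul_nonneg (show (0:ℝ) ≤ t by positivity) (show (0:ℝ) ≤ k by positivity)]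
    calc (M + k) ^ t * q ^ (t + 1) = ((M + k) * q) ^ t * q := by rw [mul_pow, pow_succ]; ring
      _ = (M + 1) ^ t * q := by
          congr 2; rw [hq]; field_simp
      _ ≤ (M + 1) ^ t * (M / (M+1)) ^ t := by gcongr
      _ = M ^ t := by rw [← mul_pow]; congr 1; field_simp
  have P4 : q ≤ 1 / (1 + z) := by
    have : 1 + z = ((n:ℝ) - 2) / ((n:ℝ) - k - 1) := by
      rw [hz]; field_simp [show (n:ℝ) - k - 1 ≠ 0 by linarith]; ring
    rw [this, one_div_div, hq, div_le_div_iff₀ hMk (by linarith), hM]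
    nlinarith [mul_nonneg (show (0:ℝ) ≤ (t:ℝ) - 2 by linarith) (show (0:ℝ) ≤ (k:ℝ) - 1 by linarith)]
  have P5 : q ^ (k - 3 * t - 3) ≤ x := by
    rw [hx]; exact pow_le_pow_left₀ hq0.le P4 _
  set c : ℝ := ((k-1).choose t : ℝ) with hc
  set V : ℝ := ((n-2*t-3).choose (k-1) : ℝ) with hV
  have hNpos : (0:ℝ) < (n-k-1).choose t := by
    exact_mod_cast Nat.choose_pos (show t ≤ n - k - 1 by omega)
  have hMt : 0 < M ^ t := by positivity
  have hc0 : 0 ≤ c := by positivity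
  have hV0 : 0 ≤ V := by positivity
  apply le_of_mul_le_mul_right _ (mul_pos hNpos hMt)
  calc ((n-1).choose t : ℝ) * ((n-t-k-1).choose (k-t-1) : ℝ) * ((n-k-1).choose t * M ^ t)
      = ((n-1).choose t * M ^ t) * ((n-k-1).choose t * ((n-t-k-1).choose (k-t-1) : ℝ)) := by ring
    _ = ((n-1).choose t * M ^ t) * (((n-k-1).choose (k-1) : ℝ) * c) := by rw [id1]
    _ ≤ (((n-k-1).choose t : ℝ) * (M + k) ^ t) * ((V * q ^ (k-2*t-2)) * c) := by gcongr
    _ = (((n-k-1).choose t : ℝ) * V * c) * (((M + k) ^ t * q ^ (t + 1)) * q ^ (k - 3 * t - 3)) := by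
        rw [show k - 2 * t - 2 = (t + 1) + (k - 3 * t - 3) by omega, pow_add]; ring
    _ ≤ (((n-k-1).choose t : ℝ) * V * c) * (M ^ t * x) := by gcongr
    _ = _ := by ring

end PartR

section PartM

open Finset

lemma final_a (z κ x V γ e : ℝ) (hz : 0 < z) (hz1 : z ≤ 1) (hκ : 1 ≤ κ) (hV : 0 ≤ V)
    (hN : x ≤ 1 - 3 / 2 * κ * z + z ^ 2 / 2) (h1 : γ ≤ z * e) (h2 : V ≤ e)
    (hx0 : 0 ≤ x)
    (h : e < κ * γ + V * x) : False := by
  have hN' : x ≤ 1 - κ * z := by nlinarith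
  have h3 : κ * γ ≤ κ * (z * e) := mul_le_mul_of_nonneg_left h1 (by linarith)
  have h4 : (1 - κ * z) * V ≤ (1 - κ * z) * e := mul_le_mul_of_nonneg_left h2 (by linarith)
  have h5 : V * x ≤ V * (1 - κ * z) := mul_le_mul_of_nonneg_left hN' hV
  nlinarith

lemma final_b (z κ x V W Y γ e : ℝ) (hz : 0 < z) (hz1 : z ≤ 1) (hκ : 1 ≤ κ) (hVW : V ≤ W)
    (hW : 0 < W) (hY : Y = z * W)
    (hN : x ≤ 1 - 3 / 2 * κ * z + z ^ 2 / 2) (hx0 : 0 ≤ x) (h2 : 2 * γ ≤ 3 * Y)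
    (h3 : W * W + (γ - Y) * Y ≤ e * W)
    (h : e < κ * γ + V * x) : False := by
  have h4 : W + (γ - Y) * z ≤ e := by
    apply le_of_mul_le_mul_right _ hW
    calc (W + (γ - Y) * z) * W = W * W + (γ - Y) * (z * W) := by ring
      _ ≤ e * W := by rw [← hY]; exact h3
  have h5 : V * x ≤ W * x := mul_le_mul_of_nonneg_right hVW hx0
  have h6 : W * x ≤ W * (1 - 3 / 2 * κ * z + z ^ 2 / 2) := mul_le_mul_of_nonneg_left hN hW.le
  have h7 : (κ - z) * γ ≤ (κ - z) * (3 / 2 * Y) :=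
    mul_le_mul_of_nonneg_left (by linarith) (by linarith)
  have h8 : W * (1 - 3 / 2 * κ * z + z ^ 2 / 2) = W - κ * (3/2 * Y) + z * Y / 2 := by
    rw [hY]; ring
  have h9 : (κ - z) * (3 / 2 * Y) = κ * (3/2*Y) - z * (3/2 * Y) := by ring
  nlinarith

lemma final_c (z x V W Y d A E f c Q R B nt : ℝ) (hVW : V ≤ W) (hW : 0 < W) (hY : Y = z * W)
    (hx0 : 0 ≤ x) (hc : 0 < c) (hd : d ≤ 1) (hE : E = A * W)
    (hN : (1 - d) * x + d * A ≤ (1 - z) * (1 - z / 2))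
    (hg : 2 * W * f + (W - Y) * (2 * W - Y) ≤ 2 * W * E)
    (hB : nt * B = E * c - R) (hR : R ≤ c * (V * x))
    (hQ : 0 < Q) (h : (1 - d) * (nt * B) < f * c) : False := by
  have h1 : f + W * ((1 - z) * (1 - z / 2)) ≤ E := by
    apply le_of_mul_le_mul_left _ (show 0 < 2 * W by linarith)
    calc _ = 2 * W * f + (W - z * W) * (2 * W - z * W) := by ring
      _ ≤ _ := by rw [← hY]; exact hg
  have h2 : c * (V * x) ≤ c * (W * x) := by gcongr
  have h3 : (1 - d) * (E * c - c * (W * x)) < f * c := by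
    refine lt_of_le_of_lt ?_ h
    rw [hB]
    apply mul_le_mul_of_nonneg_left _ (by linarith)
    linarith
  have h4 : (1 - d) * (E - W * x) < f := by
    apply lt_of_mul_lt_mul_right _ hc.le
    calc _ = (1 - d) * (E * c - c * (W * x)) := by ring
      _ < _ := h3
  have h5 : W * ((1 - d) * x + d * A) ≤ W * ((1 - z) * (1 - z / 2)) :=
    mul_le_mul_of_nonneg_left hN hW.le
  have h6 : W * ((1 - d) * x + d * A) = (1-d) * (W * x) + d * E := by rw [hE]; ring
  nlinarith

lemma sum_local {n : ℕ} (F : Finset (Finset (Fin n))) (k t : ℕ) (hcard : ∀ A ∈ F, A.card = k)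
    (i : Fin n) : ∑ A ∈ F, ((A ∩ (univ \ {i})).card.choose t : ℝ) =
      (F.filter (fun A => {i} ⊆ A)).card * ((k-1).choose t : ℝ) + (av F i).card * (k.choose t : ℝ) := by
  rw [← sum_filter_add_sum_filter_not F (fun A => {i} ⊆ A)]
  congr 1
  · rw [← nsmul_eq_mul, ← sum_const]
    apply sum_congr rfl
    intro A hA
    rw [mem_filter, singleton_subset_iff] at hA
    have : A ∩ (univ \ {i}) = A.erase i := by ext x; simp [and_comm]
    rw [this, card_erase_of_mem hA.2, hcard A hA.1]
  · rw [← nsmul_eq_mul, ← sum_const, av]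
    have : F.filter (fun A => ¬ {i} ⊆ A) = F.filter (fun A => i ∉ A) := by simp
    rw [this]
    apply sum_congr rfl
    intro A hA
    rw [mem_filter] at hA
    have : A ∩ (univ \ {i}) = A := by
      ext x
      simp only [mem_inter, mem_sdiff, mem_univ, mem_singleton, true_and, and_iff_left_iff_imp]
      rintro hx rfl; exact hA.2 hx
    rw [this, hcard A hA.1]

lemma main_nat (n k t : ℕ) (ht : 2 ≤ t) (htk : 4 * t + 8 ≤ k)
    (hn : 2 * k + 14 * t ≤ n)
    (F : Finset (Finset (Fin n)))
    (hcard : ∀ A ∈ F, A.card = k)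
    (hint : ∀ A ∈ F, ∀ B ∈ F, (A ∩ B).Nonempty)
    (hnontriv : ¬ ∃ i : Fin n, ∀ A ∈ F, i ∈ A) :
    ∃ T : Finset (Fin n), T.card = t ∧
      (F.filter (fun A => T ⊆ A)).card + (n - t - k - 1).choose (k - t - 1) ≤
        (n - t - 1).choose (k - t - 1) := by
  classical
  by_contra hcon
  push Not at hcon
  obtain ⟨hY0, hYW, hP, -⟩ := WY (n := n) k (by omega) (by omega)
  have rt : (2:ℝ) ≤ t := by exact_mod_cast ht
  have rk : 4 * (t:ℝ) + 8 ≤ k := by exact_mod_cast htk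
  have rn : 2 * (k:ℝ) + 14 * t ≤ n := by exact_mod_cast hn
  obtain ⟨z, hz⟩ : ∃ z : ℝ, z = ((k:ℝ) - 1) / (n - k - 1) := ⟨_, rfl⟩
  obtain ⟨x, hx⟩ : ∃ x : ℝ, x = (1 / (1 + z)) ^ (k - 3 * t - 3) := ⟨_, rfl⟩
  have hz0 : 0 < z := by rw [hz]; apply div_pos <;> linarith
  have hz1 : z ≤ 1 := by rw [hz, div_le_one (by linarith)]; linarith
  have hx0 : 0 ≤ x := by rw [hx]; positivity
  have he : ((k - 3 * t - 3 : ℕ) : ℝ) = k - 3 * t - 3 := by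
    rw [Nat.cast_sub (by omega), Nat.cast_sub (by omega)]; push_cast; ring
  have hN1 := N1 n k t z x _ rt rk rn hz he (by omega) hx
  have hR := R_bound n k t ht htk hn z x hz hx
  set κ : ℝ := (k:ℝ) / (k - t) with hκ
  have hκ1 : 1 ≤ κ := by rw [hκ, le_div_iff₀ (by linarith)]; linarith
  have hB : ∀ T : Finset (Fin n), T.card = t →
      ((n - t - 1).choose (k - t - 1) : ℝ) - (n - t - k - 1).choose (k - t - 1) <
        ((F.filter (fun A => T ⊆ A)).card : ℝ) := by
    intro T hT
    have := hcon T hT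
    have : (((n - t - 1).choose (k - t - 1) : ℕ) : ℝ) <
      (((F.filter (fun A => T ⊆ A)).card + (n - t - k - 1).choose (k - t - 1) : ℕ) : ℝ) := by
      exact_mod_cast this
    push_cast at this
    linarith
  have hc0 : (0:ℝ) < ((k-1).choose t : ℝ) := by exact_mod_cast Nat.choose_pos (by omega)
  have hck : (k.choose t : ℝ) = κ * (k-1).choose t := by
    have := Nat.choose_mul_succ_eq (k-1) t
    rw [show k - 1 + 1 = k by omega] at this
    have := congrArg (Nat.cast : ℕ → ℝ) this
    push_cast [Nat.cast_sub (show t ≤ k by omega)] at this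
    rw [hκ, div_mul_eq_mul_div, eq_div_iff (by linarith)]
    linarith
  have hEc : ((n-1).choose t : ℝ) * (n-t-1).choose (k-t-1) = (n-1).choose (k-1) * (k-1).choose t := by
    have := Nat.choose_mul (n := n-1) (k := k-1) (s := t) (by omega)
    rw [show n - t - 1 = n - 1 - t by omega, show k - t - 1 = k - 1 - t by omega]
    exact_mod_cast this.symm
  have hYz : ((n-3).choose (k-2) : ℝ) = z * (n-3).choose (k-1) := by
    have := Nat.choose_succ_right_eq (n-3) (k-2)
    rw [show k - 2 + 1 = k - 1 by omega, show n - 3 - (k - 2) = n - (k + 1) by omega] at this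
    have := congrArg (Nat.cast : ℕ → ℝ) this
    push_cast [Nat.cast_sub (show 1 ≤ k by omega), Nat.cast_sub (show k + 1 ≤ n by omega)] at this
    rw [hz, div_mul_eq_mul_div, eq_div_iff (by linarith)]
    linarith
  have hVW : ((n-2*t-3).choose (k-1) : ℝ) ≤ (n-3).choose (k-1) := by
    exact_mod_cast Nat.choose_le_choose _ (by omega)
  have hW0 : (0:ℝ) < (n-3).choose (k-1) := by exact_mod_cast lt_of_lt_of_le hY0 hYW
  by_cases hex : ∃ i : Fin n, 2 * (av F i).card ≤ 3 * (n-3).choose (k-2)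
  · obtain ⟨i, hi⟩ := hex
    by_cases hsm : (av F i).card ≤ (n - 2 * t - 3).choose (k - 2 * t - 2)
    · have h1 : 1 ≤ (av F i).card := by
        apply card_pos.mpr
        by_contra hne
        apply hnontriv
        refine ⟨i, fun A hA => ?_⟩
        by_contra hiA
        exact hne ⟨A, by rw [av, mem_filter]; exact ⟨hA, hiA⟩⟩
      obtain ⟨T, hT, h⟩ := case_local n k t ht htk hn F hcard hint i h1 hsm
      have := hcon T hT
      omega
    · push Not at hsm
      have hXc := card_X k (by omega) i
      have hav := avg F (univ \ {i}) t (by rw [hXc]; omega) _ (fun T _ hT => hB T hT)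
      rw [sum_local F k t hcard i, hXc, show n - 1 - k + k = n - 1 by omega, hck, mul_sub, hEc] at hav
      have htot : ((F.filter (fun A => {i} ⊆ A)).card : ℝ) + (DD (univ \ {i}) (av F i) (k-1)).card
        ≤ (n-1).choose (k-1) := by exact_mod_cast F_total F k hcard hint i
      have hkey : ((DD (univ \ {i}) (av F i) (k-1)).card : ℝ) <
          κ * (av F i).card + (n-2*t-3).choose (k-1) * x := by
        apply lt_of_mul_lt_mul_right _ hc0.le
        have := mul_le_mul_of_nonneg_right htot hc0.le
        nlinarith
      rcases Nat.lt_or_ge ((n-3).choose (k-2)) (av F i).card with h | h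
      · have h3 := exc_mid F k (by omega) (by omega) hcard i h.le (by omega)
        have h3' := (Nat.cast_le (α := ℝ)).mpr h3
        push_cast [Nat.cast_sub h.le] at h3'
        exact final_b z κ x _ _ _ _ _ hz0 hz1 hκ1 hVW hW0 hYz hN1 hx0 (by exact_mod_cast hi) h3' hkey
      · have h3 := exc_ratio F k (by omega) (by omega) hcard i h
        have h4 := DD_lov (univ \ {i}) (av F i) k (n-1-k) (k-1) (n-2*t-3) (av_prop F k hcard i) hXc
          (by omega) (by omega) (by omega) (by omega) (by
            rw [Nat.choose_symm_of_eq_add (show n-2*t-3 = (n-1-k) + (k-2*t-2) by omega)]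
            exact hsm.le)
        refine final_a z κ x _ _ _ hz0 hz1 hκ1 (Nat.cast_nonneg _) hN1 ?_ (Nat.cast_le.mpr h4) hx0 hkey
        rw [show n - 1 - k = n - (k + 1) by omega] at h3
        have h3' := (Nat.cast_le (α := ℝ)).mpr h3
        push_cast [Nat.cast_sub (show 1 ≤ k by omega), Nat.cast_sub (show k + 1 ≤ n by omega)] at h3'
        rw [hz, div_mul_eq_mul_div, le_div_iff₀ (by linarith)]
        linarith
  · push Not at hex
    have hg := good_main k (by omega) (by omega) _ F rfl hcard hint hex
    unfold Good at hg
    have hav := avg F univ t (by rw [card_univ, Fintype.card_fin]; omega) _ (fun T _ hT => hB T hT)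
    have hs : ∑ A ∈ F, ((A ∩ univ).card.choose t : ℝ) = F.card * (k.choose t : ℝ) := by
      rw [← nsmul_eq_mul, ← sum_const]
      apply sum_congr rfl
      intro A hA
      rw [inter_univ, hcard A hA]
    rw [hs, card_univ, Fintype.card_fin, hck] at hav
    have hN2 := N2 n k t z x _ rt rk rn hz he (by omega) hx _ _ rfl rfl
    set d : ℝ := (t:ℝ) * (n - k) / ((n - t) * k) with hd
    have hd1 : 1 - d = (n:ℝ) * (k - t) / ((n - t) * k) := by
      have a1 : (n:ℝ) - t ≠ 0 := by linarith
      have a2 : (k:ℝ) ≠ 0 := by linarith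
      rw [hd]; field_simp; ring
    have hd0 : 0 ≤ 1 - d := by
      rw [hd1]
      apply div_nonneg <;> apply mul_nonneg <;> linarith
    have hnt : (n.choose t : ℝ) = (n / (n - t)) * (n-1).choose t := by
      have := Nat.choose_mul_succ_eq (n-1) t
      rw [show n - 1 + 1 = n by omega] at this
      have := congrArg (Nat.cast : ℕ → ℝ) this
      push_cast [Nat.cast_sub (show t ≤ n by omega)] at this
      rw [div_mul_eq_mul_div, eq_div_iff (by linarith)]
      linarith
    have hE : ((n-1).choose (k-1) : ℝ) = (((n:ℝ) - 1) * (n - 2) / ((n - k) * (n - k - 1))) *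
        (n-3).choose (k-1) := by
      have h1 := Nat.choose_mul_succ_eq (n-3) (k-1)
      rw [show n - 3 + 1 = n - 2 by omega, show n - 2 - (k-1) = n - (k+1) by omega] at h1
      have h1 := congrArg (Nat.cast : ℕ → ℝ) h1
      push_cast [Nat.cast_sub (show 2 ≤ n by omega), Nat.cast_sub (show k + 1 ≤ n by omega)] at h1
      have h2 := Nat.choose_mul_succ_eq (n-2) (k-1)
      rw [show n - 2 + 1 = n - 1 by omega, show n - 1 - (k-1) = n - k by omega] at h2
      have h2 := congrArg (Nat.cast : ℕ → ℝ) h2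
      push_cast [Nat.cast_sub (show 1 ≤ n by omega), Nat.cast_sub (show k ≤ n by omega)] at h2
      have a1 : (0:ℝ) < n - k := by linarith
      have a2 : (0:ℝ) < n - k - 1 := by linarith
      rw [div_mul_eq_mul_div, eq_div_iff (by positivity)]
      linear_combination (-(n:ℝ) + k + 1) * h2 - ((n:ℝ) - 1) * h1
    refine final_c z x _ _ _ d _ _ (F.card) _ 1 _
      (((n - t - 1).choose (k - t - 1) : ℝ) - (n - t - k - 1).choose (k - t - 1)) ((n-1).choose t) hVW hW0 hYz hx0 hc0 (by linarith) hE hN2 hg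
      (by rw [mul_sub, hEc]) hR one_pos ?_
    have hκ0 : 0 < κ := by linarith
    apply lt_of_mul_lt_mul_left _ hκ0.le
    have e1 : κ * (1 - d) = n / (n - t) := by
      have a1 : (n:ℝ) - t ≠ 0 := by linarith
      have a2 : (k:ℝ) ≠ 0 := by linarith
      have a3 : (k:ℝ) - t ≠ 0 := by linarith
      rw [hd1, hκ]; field_simp
    rw [← mul_assoc, e1, ← mul_assoc, ← hnt]
    linarith

end PartM

end

/-- t-degree version of the Hilton–Milner theorem (Theorem 5, case t > 1):
if `1 < t ≤ k/4 - 2` and `n ≥ 2k + 14t`, then any non-trivial intersecting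
family `F` of `k`-subsets of `[n]` satisfies
`δ_t(F) ≤ C(n-t-1, k-t-1) - C(n-t-k-1, k-t-1)`. -/
theorem t_degree_HM (n k t : ℕ) (ht : 1 < t) (htk : (t : ℝ) ≤ (k : ℝ) / 4 - 2)
    (hn : 2 * k + 14 * t ≤ n)
    (F : Finset (Finset (Fin n)))
    (hcard : ∀ A ∈ F, A.card = k)
    (hint : ∀ A ∈ F, ∀ B ∈ F, (A ∩ B).Nonempty)
    (hnontriv : ¬ ∃ i : Fin n, ∀ A ∈ F, i ∈ A) :
    ∃ T : Finset (Fin n), T.card = t ∧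
      ((F.filter (fun A => T ⊆ A)).card : ℤ) ≤
        ((n - t - 1).choose (k - t - 1) : ℤ) - ((n - t - k - 1).choose (k - t - 1) : ℤ) := by
  have htk' : 4 * t + 8 ≤ k := by
    have : (4 * t + 8 : ℝ) ≤ k := by linarith
    exact_mod_cast this
  obtain ⟨T, hT, h⟩ := main_nat n k t ht htk' hn F hcard hint hnontriv
  refine ⟨T, hT, ?_⟩
  have : (((F.filter (fun A => T ⊆ A)).card + (n - t - k - 1).choose (k - t - 1) : ℕ) : ℤ) ≤
      ((n - t - 1).choose (k - t - 1) : ℕ) := by exact_mod_cast h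
  push_cast at this
  linarith
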